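/- arXiv:1808.05460 — 13 statements merged into one kernel-verified Lean document; each statement's English description precedes it below -/
import Mathlib

section
/- Let n ≥ 1 and let A = L ∪ R be an MSTD set of integers that is P_n, with 1 ∈ A, 2n ∈ A, L ⊆ [1,n] and R ⊆ [n+1,2n]. Let m ≥ 0 be an integer, let M ⊆ [n+1, n+m], and set A' = L ∪ M ∪ (R+m). If A' is SP_n (equivalently, A'+A' ⊇ [n+2, 3n+2m]), then A' is MSTD. -/
/-!
Passing from `A = L ∪ R` to `A'` only inserts material in the middle. A sum of two elements of
`A` that is at most `n + 1` uses only elements of `L`, and one that is at least `3n + 1` uses only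
elements of `R`, so the fringes of `A + A` reappear in `A' + A'`, the upper one shifted by `2m`.
Likewise a difference of `A'` of absolute value at least `n + m` is a difference between an element
of `R + m` and an element of `L`, hence is a fringe difference of `A` shifted by `±m`. Since the
middle of `A' + A'` and the middle of `A - A` are full intervals, `|A' + A'| ≥ |A + A| + 2m` and
`|A' - A'| ≤ |A - A| + 2m`, and the strict inequality for `A` passes to `A'`. Both counts are
instances of `card_add_le_of_fringe`.
-/

open Finset Pointwise

/-- A finite set of integers is MSTD (more-sums-than-differences) if `|A+A| > |A-A|`. -/
def MSTD (A : Finset ℤ) : Prop := (A - A).card < (A + A).card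

/-- Fringe comparison: if `Y` contains the full interval `[a + s, b + t]`, the part of `X` below
`a` shifted by `s`, and the part of `X` above `b` shifted by `t`, then `Y` has at least as many
elements as `X` plus the growth `t - s` (possibly negative) of the middle interval `[a, b]`. -/
theorem card_add_le_of_fringe (X Y : Finset ℤ) (a b s t : ℤ) (hab : a ≤ b + 1)
    (hab' : a + s ≤ b + t + 1) (hmid : Finset.Icc (a + s) (b + t) ⊆ Y)
    (hlow : ∀ x ∈ X, x < a → x + s ∈ Y) (hhigh : ∀ x ∈ X, b < x → x + t ∈ Y) :
    (X.card : ℤ) + (t - s) ≤ Y.card := by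
  have hX : X ⊆ Icc a b ∪ (X.filter (· < a) ∪ X.filter (b < ·)) := by
    intro x hx
    simp only [mem_union, mem_Icc, mem_filter, hx, true_and]
    omega
  have hY : Icc (a + s) (b + t) ∪
      ((X.filter (· < a)).image (· + s) ∪ (X.filter (b < ·)).image (· + t)) ⊆ Y := by
    refine union_subset hmid (union_subset ?_ ?_)
    · intro y hy
      obtain ⟨x, hx, rfl⟩ := mem_image.1 hy
      exact hlow x (mem_filter.1 hx).1 (mem_filter.1 hx).2
    · intro y hy
      obtain ⟨x, hx, rfl⟩ := mem_image.1 hy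
      exact hhigh x (mem_filter.1 hx).1 (mem_filter.1 hx).2
  have hcX := (card_le_card hX).trans
    ((card_union_le _ _).trans (Nat.add_le_add_left (card_union_le _ _) _))
  have hcY := card_le_card hY
  rw [card_union_of_disjoint, card_union_of_disjoint,
    card_image_of_injective _ (add_left_injective s),
    card_image_of_injective _ (add_left_injective t), Int.card_Icc] at hcY
  · rw [Int.card_Icc] at hcX
    omega
  · rw [disjoint_left]
    intro y hy hy'
    simp only [mem_image, mem_filter] at hy hy'
    obtain ⟨x, hx, rfl⟩ := hy
    obtain ⟨z, hz, hzx⟩ := hy'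
    omega
  · rw [disjoint_left]
    intro y hy hy'
    simp only [mem_union, mem_image, mem_filter, mem_Icc] at hy hy'
    obtain ⟨z, hz, hzx⟩ | ⟨z, hz, hzx⟩ := hy' <;> omega

theorem stmt0 (n : ℤ) (hn : 1 ≤ n) (L R : Finset ℤ)
    (hL : L ⊆ Finset.Icc 1 n) (hR : R ⊆ Finset.Icc (n + 1) (2 * n))
    (h1 : (1 : ℤ) ∈ L ∪ R) (h2 : 2 * n ∈ L ∪ R)
    (hMSTD : MSTD (L ∪ R))
    (hPsum : Finset.Icc (n + 2) (3 * n) ⊆ (L ∪ R) + (L ∪ R))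
    (hPdiff : Finset.Icc (1 - n) (n - 1) ⊆ (L ∪ R) - (L ∪ R))
    (m : ℤ) (hm : 0 ≤ m) (M : Finset ℤ) (hM : M ⊆ Finset.Icc (n + 1) (n + m))
    (A' : Finset ℤ) (hA' : A' = L ∪ M ∪ R.image (· + m))
    (hSP : Finset.Icc (n + 2) (3 * n + 2 * m) ⊆ A' + A') :
    MSTD A' := by
  have hL' : ∀ x ∈ L, 1 ≤ x ∧ x ≤ n := fun x hx => mem_Icc.1 (hL hx)
  have hR' : ∀ x ∈ R, n + 1 ≤ x ∧ x ≤ 2 * n := fun x hx => mem_Icc.1 (hR hx)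
  have hM' : ∀ x ∈ M, n + 1 ≤ x ∧ x ≤ n + m := fun x hx => mem_Icc.1 (hM hx)
  have hLA' : ∀ x ∈ L, x ∈ A' := fun x hx => by
    rw [hA']
    exact mem_union_left _ (mem_union_left _ hx)
  have hRA' : ∀ x ∈ R, x + m ∈ A' := fun x hx => by
    rw [hA']
    exact mem_union_right _ (mem_image_of_mem _ hx)
  have hcases : ∀ x ∈ A', x ∈ L ∨ x ∈ M ∨ ∃ r ∈ R, r + m = x := fun x hx => by
    rw [hA'] at hx
    simpa only [mem_union, mem_image, or_assoc] using hx
  have hrange : ∀ x ∈ A', 1 ≤ x ∧ x ≤ 2 * n + m := fun x hx => by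
    obtain h | h | ⟨r, h, rfl⟩ := hcases x hx
    · have := hL' x h
      omega
    · have := hM' x h
      omega
    · have := hR' r h
      omega
  have hlowA' : ∀ x ∈ A', x ≤ n → x ∈ L := fun x hx hxn => by
    obtain h | h | ⟨r, h, rfl⟩ := hcases x hx
    · exact h
    · have := hM' x h
      omega
    · have := hR' r h
      omega
  have hhighA' : ∀ x ∈ A', n + m < x → ∃ r ∈ R, r + m = x := fun x hx hxn => by
    obtain h | h | h := hcases x hx
    · have := hL' x h
      omega
    · have := hM' x h
      omega
    · exact h
  have hrangeA : ∀ x ∈ L ∪ R, 1 ≤ x ∧ x ≤ 2 * n := fun x hx => by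
    obtain h | h := mem_union.1 hx
    · have := hL' x h
      omega
    · have := hR' x h
      omega
  have hlowA : ∀ x ∈ L ∪ R, x ≤ n → x ∈ L := fun x hx hxn => by
    obtain h | h := mem_union.1 hx
    · exact h
    · have := hR' x h
      omega
  have hhighA : ∀ x ∈ L ∪ R, n < x → x ∈ R := fun x hx hxn => by
    obtain h | h := mem_union.1 hx
    · have := hL' x h
      omega
    · exact h
  have hsum := card_add_le_of_fringe ((L ∪ R) + (L ∪ R)) (A' + A') (n + 2) (3 * n) 0 (2 * m)
    (by omega) (by omega) (by simpa using hSP)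
    (fun s hs hsn => by
      obtain ⟨x, hx, y, hy, rfl⟩ := mem_add.1 hs
      have hx' := hrangeA x hx
      have hy' := hrangeA y hy
      rw [add_zero]
      exact add_mem_add (hLA' x (hlowA x hx (by omega))) (hLA' y (hlowA y hy (by omega))))
    (fun s hs hsn => by
      obtain ⟨x, hx, y, hy, rfl⟩ := mem_add.1 hs
      have hx' := hrangeA x hx
      have hy' := hrangeA y hy
      rw [show x + y + 2 * m = (x + m) + (y + m) by ring]
      exact add_mem_add (hRA' x (hhighA x hx (by omega))) (hRA' y (hhighA y hy (by omega))))
  have hdiff := card_add_le_of_fringe (A' - A') ((L ∪ R) - (L ∪ R)) (1 - n - m) (n + m - 1) m (-m)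
    (by omega) (by omega)
    (by
      rw [show 1 - n - m + m = 1 - n by ring, show n + m - 1 + -m = n - 1 by ring]
      exact hPdiff)
    (fun d hd hdn => by
      obtain ⟨x, hx, y, hy, rfl⟩ := mem_sub.1 hd
      have hx' := hrange x hx
      have hy' := hrange y hy
      obtain ⟨r, hr, rfl⟩ := hhighA' y hy (by omega)
      rw [show x - (r + m) + m = x - r by ring]
      exact sub_mem_sub (mem_union_left _ (hlowA' x hx (by omega))) (mem_union_right _ hr))
    (fun d hd hdn => by
      obtain ⟨x, hx, y, hy, rfl⟩ := mem_sub.1 hd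
      have hx' := hrange x hx
      have hy' := hrange y hy
      obtain ⟨r, hr, rfl⟩ := hhighA' x hx (by omega)
      rw [show r + m - y + -m = r - y by ring]
      exact sub_mem_sub (mem_union_right _ hr) (mem_union_left _ (hlowA' y hy (by omega))))
  unfold MSTD at hMSTD ⊢
  omega
end

section
/- Let n ≥ 5 and let A = L ∪ R be an MSTD set of integers that is P_{n−4}, with 5 ∈ A, 2n−4 ∈ A, L ⊆ [5,n] and R ⊆ [n+1,2n−4]. Let m ≥ 0 be an integer, let M ⊆ [n+1, n+m], and set A' = L ∪ M ∪ (R+m). If A' is SP_{n−4} (equivalently, A'+A' ⊇ [n+6, 3n+2m−4]), then A' is MSTD. -/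
/-!
Write `A = L ∪ R`. Passing from `A` to `A'` keeps the part `L` up to `n` and translates the part `R`
by `m`. Sums outside the middle interval `[n + 6, 3n - 4]` use two elements of `L` or two of `R`, so
they survive in `A' + A'` (the upper ones translated by `2m`), while the middle interval, completely
filled in `A' + A'` by hypothesis, grows by `2m` points; hence `|A' + A'| ≥ |A + A| + 2m`.
Differences of `A'` of absolute value above `n - 5 + m` come from one element of `R + m` and one of
`L`, hence are differences of `A` translated by `±m`, and `A - A` already fills the middle interval
`[5 - n, n - 5]`; hence `|A' - A'| ≤ |A - A| + 2m`. Both counts are instances of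
`card_le_of_stretch`.
-/

open Finset Pointwise

/-- If `S` contains the whole interval `[a, b]`, and `T` outside the interval `[a - p, b + q]` is
carried into `S` by shifting its lower part up by `p` and its upper part down by `q`, then
`|T| ≤ |S| + p + q`. The shifts may be negative, which gives lower bounds on `|S|`. -/
lemma card_le_of_stretch (S T : Finset ℤ) (a b p q : ℤ) (hab : a ≤ b + 1)
    (hpq : a - p ≤ b + q + 1) (hS : Finset.Icc a b ⊆ S)
    (hlo : ∀ x ∈ T, x < a - p → x + p ∈ S) (hhi : ∀ x ∈ T, b + q < x → x - q ∈ S) :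
    (T.card : ℤ) ≤ S.card + (p + q) := by
  have hT : T.card ≤ (S.filter (· < a)).card + (Finset.Icc (a - p) (b + q)).card
      + (S.filter (b < ·)).card := by
    have hsub : T ⊆ (S.filter (· < a)).image (· - p) ∪ Finset.Icc (a - p) (b + q)
        ∪ (S.filter (b < ·)).image (· + q) := by
      intro x hx
      simp only [mem_union, mem_image, mem_filter, mem_Icc]
      by_cases h : x < a - p
      · exact Or.inl (Or.inl ⟨x + p, ⟨hlo x hx h, by omega⟩, by omega⟩)
      by_cases h' : b + q < x
      · exact Or.inr ⟨x - q, ⟨hhi x hx h', by omega⟩, by omega⟩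
      · exact Or.inl (Or.inr (by omega))
    have c1 : ((S.filter (· < a)).image (· - p)).card ≤ _ := card_image_le
    have c2 : ((S.filter (b < ·)).image (· + q)).card ≤ _ := card_image_le
    have c3 := card_le_card hsub
    have c4 := card_union_le ((S.filter (· < a)).image (· - p) ∪ Finset.Icc (a - p) (b + q))
      ((S.filter (b < ·)).image (· + q))
    have c5 := card_union_le ((S.filter (· < a)).image (· - p)) (Finset.Icc (a - p) (b + q))
    omega
  have hS' : (S.filter (· < a)).card + (Finset.Icc a b).card + (S.filter (b < ·)).card
      ≤ S.card := by
    rw [← card_union_of_disjoint, ← card_union_of_disjoint]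
    · apply card_le_card
      exact union_subset (union_subset (filter_subset _ _) hS) (filter_subset _ _)
    · rw [disjoint_left]
      intro x hx hx'
      simp only [mem_union, mem_filter, mem_Icc] at hx hx'
      omega
    · rw [disjoint_left]
      intro x hx hx'
      simp only [mem_filter, mem_Icc] at hx hx'
      omega
  rw [Int.card_Icc] at hT hS'
  omega

theorem stmt1 (n : ℤ) (hn : 5 ≤ n) (L R : Finset ℤ)
    (hL : L ⊆ Finset.Icc 5 n) (hR : R ⊆ Finset.Icc (n + 1) (2 * n - 4))
    (h1 : (5 : ℤ) ∈ L ∪ R) (h2 : 2 * n - 4 ∈ L ∪ R)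
    (hMSTD : MSTD (L ∪ R))
    (hPsum : Finset.Icc (n + 6) (3 * n - 4) ⊆ (L ∪ R) + (L ∪ R))
    (hPdiff : Finset.Icc (5 - n) (n - 5) ⊆ (L ∪ R) - (L ∪ R))
    (m : ℤ) (hm : 0 ≤ m) (M : Finset ℤ) (hM : M ⊆ Finset.Icc (n + 1) (n + m))
    (A' : Finset ℤ) (hA' : A' = L ∪ M ∪ R.image (· + m))
    (hSP : Finset.Icc (n + 6) (3 * n + 2 * m - 4) ⊆ A' + A') :
    MSTD A' := by
  have hL' : ∀ x ∈ L, 5 ≤ x ∧ x ≤ n := fun x hx => mem_Icc.1 (hL hx)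
  have hR' : ∀ x ∈ R, n + 1 ≤ x ∧ x ≤ 2 * n - 4 := fun x hx => mem_Icc.1 (hR hx)
  have hM' : ∀ x ∈ M, n + 1 ≤ x ∧ x ≤ n + m := fun x hx => mem_Icc.1 (hM hx)
  have memA : ∀ x, x ∈ L ∪ R ↔ x ∈ L ∨ x ∈ R := fun x => mem_union
  have memA' : ∀ x, x ∈ A' ↔ x ∈ L ∨ x ∈ M ∨ x - m ∈ R := by
    intro x
    simp only [hA', mem_union, mem_image, or_assoc]
    refine or_congr_right (or_congr_right ⟨?_, fun h => ⟨x - m, h, by omega⟩⟩)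
    rintro ⟨y, hy, rfl⟩
    simpa using hy
  have bdA : ∀ x ∈ L ∪ R, 5 ≤ x ∧ x ≤ 2 * n - 4 := by
    intro x hx
    rcases (memA x).1 hx with h | h
    · have := hL' x h; omega
    · have := hR' x h; omega
  have bdA' : ∀ x ∈ A', 5 ≤ x ∧ x ≤ 2 * n - 4 + m := by
    intro x hx
    rcases (memA' x).1 hx with h | h | h
    · have := hL' x h; omega
    · have := hM' x h; omega
    · have := hR' _ h; omega
  -- On `x ≤ n` both sets coincide with `L`; above the middle both are translates of `R`.
  have loA : ∀ x ∈ L ∪ R, x ≤ n → x ∈ A' := by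
    intro x hx hxn
    rcases (memA x).1 hx with h | h
    · exact (memA' x).2 (Or.inl h)
    · have := hR' x h; omega
  have hiA : ∀ x ∈ L ∪ R, n + 1 ≤ x → x + m ∈ A' := by
    intro x hx hxn
    rcases (memA x).1 hx with h | h
    · have := hL' x h; omega
    · exact (memA' _).2 (Or.inr (Or.inr (by simpa using h)))
  have loA' : ∀ x ∈ A', x ≤ n → x ∈ L ∪ R := by
    intro x hx hxn
    rcases (memA' x).1 hx with h | h | h
    · exact (memA x).2 (Or.inl h)
    · have := hM' x h; omega
    · have := hR' _ h; omega
  have hiA' : ∀ x ∈ A', n + m + 1 ≤ x → x - m ∈ L ∪ R := by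
    intro x hx hxn
    rcases (memA' x).1 hx with h | h | h
    · have := hL' x h; omega
    · have := hM' x h; omega
    · exact (memA _).2 (Or.inr h)
  have hsum : (((L ∪ R) + (L ∪ R)).card : ℤ) ≤ (A' + A').card + (0 + -(2 * m)) := by
    refine card_le_of_stretch (A' + A') _ (n + 6) (3 * n + 2 * m - 4) 0 (-(2 * m))
      (by omega) (by omega) hSP ?_ ?_
    · intro z hz hlt
      obtain ⟨x, hx, y, hy, rfl⟩ := mem_add.1 hz
      have := bdA x hx
      have := bdA y hy
      exact mem_add.2 ⟨x, loA x hx (by omega), y, loA y hy (by omega), by omega⟩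
    · intro z hz hlt
      obtain ⟨x, hx, y, hy, rfl⟩ := mem_add.1 hz
      have := bdA x hx
      have := bdA y hy
      exact mem_add.2 ⟨x + m, hiA x hx (by omega), y + m, hiA y hy (by omega), by omega⟩
  have hdiff : ((A' - A').card : ℤ) ≤ ((L ∪ R) - (L ∪ R)).card + (m + m) := by
    refine card_le_of_stretch _ (A' - A') (5 - n) (n - 5) m m
      (by omega) (by omega) hPdiff ?_ ?_
    · intro z hz hlt
      obtain ⟨x, hx, y, hy, rfl⟩ := mem_sub.1 hz
      have := bdA' x hx
      have := bdA' y hy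
      exact mem_sub.2 ⟨x, loA' x hx (by omega), y - m, hiA' y hy (by omega), by omega⟩
    · intro z hz hlt
      obtain ⟨x, hx, y, hy, rfl⟩ := mem_sub.1 hz
      have := bdA' x hx
      have := bdA' y hy
      exact mem_sub.2 ⟨x - m, hiA' x hx (by omega), y, loA' y hy (by omega), by omega⟩
  unfold MSTD at hMSTD ⊢
  omega
end

section
/- Let S be a nonempty finite set of integers with |S+S| − |S−S| ≥ 10|S| (a 10-strong MSTD set). If a_1 < a_2 < a_3 < a_4 are integers with a_1 > max S, then S ∪ {a_1, a_2, a_3, a_4} is MSTD. Similarly, if b_1 < b_2 < b_3 < b_4 are integers with b_4 < min S, then S ∪ {b_1, b_2, b_3, b_4} is MSTD. -/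
/-!
Adjoining a set `T` of at most four elements to `S` creates at most `8|S| + 16` new differences:
those in `S - T`, `T - S` and `T - T`. Sums are never lost, so the surplus `10|S|` of sums over
differences survives as soon as `2|S| > 16`. This holds because `10|S| ≤ |S + S| ≤ |S|²` forces
`|S| ≥ 10`. The position of the new elements relative to `S` plays no role.
-/

open Finset Pointwise

/-- The order-free core of the theorem: any set with at most four elements may be adjoined. -/
theorem mstd_union_of_card_le_four (S T : Finset ℤ) (hS : S.Nonempty)
    (hstrong : (S - S).card + 10 * S.card ≤ (S + S).card) (hT : T.card ≤ 4) :
    MSTD (S ∪ T) := by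
  have hpos : 0 < S.card := hS.card_pos
  have hten : 10 ≤ S.card := by
    have h : (S + S).card ≤ S.card * S.card := card_add_le
    by_contra! hlt
    nlinarith
  have hsum : (S + S).card ≤ ((S ∪ T) + (S ∪ T)).card :=
    card_le_card (add_subset_add subset_union_left subset_union_left)
  have hdiff : ((S ∪ T) - (S ∪ T)).card ≤
      (S - S).card + (S - T).card + ((T - S).card + (T - T).card) := by
    rw [union_sub, sub_union, sub_union]
    exact (card_union_le _ _).trans (add_le_add (card_union_le _ _) (card_union_le _ _))
  have hST : (S - T).card ≤ S.card * T.card := card_sub_le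
  have hTS : (T - S).card ≤ T.card * S.card := card_sub_le
  have hTT : (T - T).card ≤ T.card * T.card := card_sub_le
  unfold MSTD
  nlinarith

theorem stmt5 (S : Finset ℤ) (hS : S.Nonempty)
    (hstrong : (S - S).card + 10 * S.card ≤ (S + S).card) :
    (∀ a₁ a₂ a₃ a₄ : ℤ, a₁ < a₂ → a₂ < a₃ → a₃ < a₄ → S.max' hS < a₁ →
      MSTD (S ∪ {a₁, a₂, a₃, a₄})) ∧
    (∀ b₁ b₂ b₃ b₄ : ℤ, b₁ < b₂ → b₂ < b₃ → b₃ < b₄ → b₄ < S.min' hS →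
      MSTD (S ∪ {b₁, b₂, b₃, b₄})) :=
  ⟨fun _ _ _ _ _ _ _ _ => mstd_union_of_card_le_four S _ hS hstrong card_le_four,
    fun _ _ _ _ _ _ _ _ => mstd_union_of_card_le_four S _ hS hstrong card_le_four⟩
end

section
/- There exists a nonempty finite set S of integers such that |S+S| − |S−S| ≥ 10|S|. -/
open Finset Pointwise

/-!
Conway's set `A = {0, 2, 3, 4, 7, 11, 12, 14}` has `|A| = 8`, `|A + A| = 26` and `|A - A| = 25`.
All three cardinalities are multiplicative under Cartesian powers, and
`26 ^ 4 - 25 ^ 4 = 66351 ≥ 40960 = 10 * 8 ^ 4`, so `A ^ 4 ⊆ ℤ ^ 4` has the required property.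
It is carried into `ℤ` by reading the coordinates as digits in base `29`: the sets `A`, `A + A` and
`A - A` each lie in an interval of `29` consecutive integers, so no two digit strings collide
(`card_appendDigit`), while addition and subtraction act digitwise (`appendDigit_add`,
`appendDigit_sub`).
-/

/-- The integers `x + 29 * b` with `x ∈ X` and `b ∈ B`, i.e. base-`29` expansions with last digit
in `X` and remaining part in `B`. -/
def appendDigit (X B : Finset ℤ) : Finset ℤ := X + B.image (AddMonoidHom.mulLeft (29 : ℤ))

lemma appendDigit_add (X Y B C : Finset ℤ) :
    appendDigit X B + appendDigit Y C = appendDigit (X + Y) (B + C) := by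
  simp only [appendDigit, Finset.image_add]
  exact add_add_add_comm _ _ _ _

lemma appendDigit_sub (X Y B C : Finset ℤ) :
    appendDigit X B - appendDigit Y C = appendDigit (X - Y) (B - C) := by
  have himage : (B - C).image (AddMonoidHom.mulLeft (29 : ℤ)) =
      B.image (AddMonoidHom.mulLeft (29 : ℤ)) - C.image (AddMonoidHom.mulLeft (29 : ℤ)) :=
    Finset.image_image₂_distrib (map_sub _)
  rw [appendDigit, appendDigit, appendDigit, himage]
  exact add_sub_add_comm _ _ _ _

/-- Digits from a window of `29` consecutive integers are determined by the value modulo `29`. -/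
lemma card_appendDigit (l : ℤ) {X : Finset ℤ} (hX : ∀ x ∈ X, l ≤ x ∧ x ≤ l + 28) (B : Finset ℤ) :
    (appendDigit X B).card = X.card * B.card := by
  have hinj : Function.Injective (AddMonoidHom.mulLeft (29 : ℤ)) := fun a b h => by
    simpa using h
  rw [appendDigit, ← Finset.card_image_of_injective B hinj, Finset.card_add_iff]
  rintro ⟨x, u⟩ hxu ⟨y, v⟩ hyv h
  simp only [Set.mem_prod, Finset.mem_coe, Finset.mem_image, AddMonoidHom.coe_mulLeft] at hxu hyv h
  obtain ⟨hx, b, -, rfl⟩ := hxu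
  obtain ⟨hy, c, -, rfl⟩ := hyv
  have := hX x hx
  have := hX y hy
  rw [Prod.mk.injEq]
  omega

/-- Conway's set, which has more sums than differences. -/
def conwaySet : Finset ℤ := {0, 2, 3, 4, 7, 11, 12, 14}

/-- The integers whose base-`29` expansion consists of `k` digits from `conwaySet`: a copy of the
Cartesian power `conwaySet ^ k`. -/
def conwayPower : ℕ → Finset ℤ
  | 0 => {0}
  | k + 1 => appendDigit conwaySet (conwayPower k)

lemma card_conwayPower (k : ℕ) : (conwayPower k).card = 8 ^ k := by
  induction k with
  | zero => rfl
  | succ k ih =>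
    have hc : conwaySet.card = 8 := by decide
    rw [conwayPower, card_appendDigit 0 (by decide), ih, hc, pow_succ']

lemma card_conwayPower_add (k : ℕ) : (conwayPower k + conwayPower k).card = 26 ^ k := by
  induction k with
  | zero => rfl
  | succ k ih =>
    have hc : (conwaySet + conwaySet).card = 26 := by decide +kernel
    rw [conwayPower, appendDigit_add, card_appendDigit 0 (by decide +kernel), ih, hc, pow_succ']

lemma card_conwayPower_sub (k : ℕ) : (conwayPower k - conwayPower k).card = 25 ^ k := by
  induction k with
  | zero => rfl
  | succ k ih =>
    have hc : (conwaySet - conwaySet).card = 25 := by decide +kernel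
    rw [conwayPower, appendDigit_sub, card_appendDigit (-14) (by decide +kernel), ih, hc, pow_succ']

theorem stmt6 : ∃ S : Finset ℤ, S.Nonempty ∧
    (S - S).card + 10 * S.card ≤ (S + S).card := by
  refine ⟨conwayPower 4, ?_, ?_⟩
  · rw [← Finset.card_pos, card_conwayPower]
    norm_num
  · rw [card_conwayPower, card_conwayPower_add, card_conwayPower_sub]
    norm_num
end

section
/- There exists a positive integer N such that for every integer r ≥ N, the interval [1,r] can be partitioned into exactly three pairwise disjoint MSTD subsets whose union is [1,r]. -/
/-!
The partition consists of two translates of one eight-element MSTD set `core` (a reflected copy of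
Conway's set), one near each end of `[1,r]`, and of everything else. The two translates are
`core + 4` and `core + (r - 16)`; being translates, they are MSTD.

Let `C` be the complement of the two translates in `[1,r]`. The possible sums fill `[2,2r]` and the
possible differences fill `[-(r-1),r-1]`, both of size `2r - 1`. The positions of the two translates
are tuned so that `C + C` misses only the sum `2r - 5` (`add_mem_rest`), while `C - C` misses the
two differences `±(r - 7)` (`sub_ne_rest`). Hence `|C - C| ≤ 2r - 3 < 2r - 2 ≤ |C + C|`.
-/

open Finset Pointwise

/-- An MSTD set of eight elements: the reflection `14 - S` of Conway's set
`S = {0, 2, 3, 4, 7, 11, 12, 14}`. -/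
def core : Finset ℤ := {0, 2, 3, 7, 10, 11, 12, 14}

/-- The translate `core + t`. -/
def coreAt (t : ℤ) : Finset ℤ := core.image (· + t)

/-- What is left of `[1,r]` after removing `core + 4` and `core + (r - 16)`. -/
noncomputable def rest (r : ℤ) : Finset ℤ := Finset.Icc 1 r \ (coreAt 4 ∪ coreAt (r - 16))

theorem mstd_core : MSTD core := by
  unfold MSTD core
  decide +kernel

theorem mstd_coreAt (t : ℤ) : MSTD (coreAt t) := by
  have hsub : coreAt t - coreAt t = core - core := by
    ext x
    simp only [coreAt, Finset.mem_sub, Finset.mem_image, exists_exists_and_eq_and,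
      add_sub_add_right_eq_sub]
  have hadd : coreAt t + coreAt t = (core + core).image (· + 2 * t) := by
    ext x
    simp only [coreAt, Finset.mem_add, Finset.mem_image, exists_exists_and_eq_and]
    constructor
    · rintro ⟨a, ha, b, hb, rfl⟩
      exact ⟨a + b, ⟨a, ha, b, hb, rfl⟩, by ring⟩
    · rintro ⟨_, ⟨a, ha, b, hb, rfl⟩, rfl⟩
      exact ⟨a, ha, b, hb, by ring⟩
  have h := mstd_core
  unfold MSTD at h ⊢
  rwa [hsub, hadd, Finset.card_image_of_injective _ (add_left_injective _)]

theorem mem_coreAt {t x : ℤ} : x ∈ coreAt t ↔ x = t ∨ x = t + 2 ∨ x = t + 3 ∨ x = t + 7 ∨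
    x = t + 10 ∨ x = t + 11 ∨ x = t + 12 ∨ x = t + 14 := by
  simp only [coreAt, core, Finset.mem_image, Finset.mem_insert, Finset.mem_singleton]
  constructor
  · rintro ⟨a, ha, rfl⟩
    omega
  · intro h
    exact ⟨x - t, by omega, by ring⟩

theorem mem_rest {r x : ℤ} : x ∈ rest r ↔ (1 ≤ x ∧ x ≤ r) ∧
    ¬ (x = 4 ∨ x = 6 ∨ x = 7 ∨ x = 11 ∨ x = 14 ∨ x = 15 ∨ x = 16 ∨ x = 18) ∧
    ¬ (x = r - 16 ∨ x = r - 14 ∨ x = r - 13 ∨ x = r - 9 ∨ x = r - 6 ∨ x = r - 5 ∨ x = r - 4 ∨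
      x = r - 2) := by
  simp only [rest, Finset.mem_sdiff, Finset.mem_union, Finset.mem_Icc, mem_coreAt]
  omega

-- Membership in `rest r` is used only through `mem_rest`; unfolding `rest r + rest r` further makes
-- the elaborator evaluate the underlying lists.
attribute [irreducible] rest

/-- Every sum in `[2,2r]` other than `2r - 5` is attained. -/
theorem add_mem_rest {r s : ℤ} (hr : 100 ≤ r) (h2 : 2 ≤ s) (hs : s ≤ 2 * r) (hne : s ≠ 2 * r - 5) :
    ∃ x ∈ rest r, ∃ y ∈ rest r, x + y = s := by
  -- It suffices to exhibit the first summand.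
  suffices h : ∃ x, x ∈ rest r ∧ s - x ∈ rest r by
    obtain ⟨x, hx, hy⟩ := h
    exact ⟨x, hx, s - x, hy, by ring⟩
  simp only [mem_rest]
  -- Small sums need a first summand among the few smallest elements of `rest r`.
  rcases le_or_gt s 40 with hlow | hlow
  · have h : (s - 1 ∈ ({1, 2, 3, 5, 8, 9, 10, 12, 13, 17} : Finset ℤ) ∨ 20 ≤ s) ∨
        s - 2 ∈ ({2, 3, 5, 8, 9, 10, 12, 13, 17} : Finset ℤ) ∨
        s - 3 ∈ ({3, 5, 8, 9, 10, 12, 13, 17} : Finset ℤ) ∨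
        s - 8 ∈ ({8, 9, 10, 12, 13, 17} : Finset ℤ) ∨
        s - 5 ∈ ({5, 8, 9, 10, 12, 13, 17} : Finset ℤ) := by
      simp only [Finset.mem_insert, Finset.mem_singleton]
      omega
    simp only [Finset.mem_insert, Finset.mem_singleton] at h
    rcases h with h | h | h | h | h
    · exact ⟨1, by omega, by omega⟩
    · exact ⟨2, by omega, by omega⟩
    · exact ⟨3, by omega, by omega⟩
    · exact ⟨8, by omega, by omega⟩
    · exact ⟨5, by omega, by omega⟩
  -- The element `1` reaches every sum that leaves the second summand between the translates.
  rcases le_or_gt s (r - 16) with h | h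
  · exact ⟨1, by omega, by omega⟩
  -- Central sums are split near their midpoint, which lies between the translates.
  rcases le_or_gt s (2 * r - 40) with h | h
  · exact ⟨s / 2, by omega, by omega⟩
  -- Large sums need a first summand among the few largest elements of `rest r`.
  obtain ⟨u, rfl⟩ : ∃ u, s = 2 * r - u := ⟨2 * r - s, by ring⟩
  have h : (u ∈ ({0, 1, 3, 7, 8, 10, 11, 12, 15} : Finset ℤ) ∨ 17 ≤ u) ∨
      u - 1 ∈ ({1, 3, 7, 8, 10, 11, 12, 15} : Finset ℤ) ∨
      u - 3 ∈ ({3, 7, 8, 10, 11, 12, 15} : Finset ℤ) ∨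
      u - 7 ∈ ({7, 8, 10, 11, 12, 15} : Finset ℤ) := by
    simp only [Finset.mem_insert, Finset.mem_singleton]
    omega
  simp only [Finset.mem_insert, Finset.mem_singleton] at h
  rcases h with h | h | h | h
  · exact ⟨r, by omega, by omega⟩
  · exact ⟨r - 1, by omega, by omega⟩
  · exact ⟨r - 3, by omega, by omega⟩
  · exact ⟨r - 7, by omega, by omega⟩

/-- A difference `r - 7` would have to come from one of the pairs `(y, y + r - 7)`, `1 ≤ y ≤ 7`,
each of which meets one of the removed translates. -/
theorem sub_ne_rest {r x y : ℤ} (hx : x ∈ rest r) (hy : y ∈ rest r) : x - y ≠ r - 7 := by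
  rw [mem_rest] at hx hy
  omega

theorem mstd_rest {r : ℤ} (hr : 100 ≤ r) : MSTD (rest r) := by
  have hsum : (Finset.Icc 2 (2 * r)).erase (2 * r - 5) ⊆ rest r + rest r := by
    intro s hs
    rw [Finset.mem_erase, Finset.mem_Icc] at hs
    exact Finset.mem_add.2 (add_mem_rest hr hs.2.1 hs.2.2 hs.1)
  have hdiff : rest r - rest r ⊆
      ((Finset.Icc (-(r - 1)) (r - 1)).erase (r - 7)).erase (-(r - 7)) := by
    intro d hd
    obtain ⟨x, hx, y, hy, rfl⟩ := Finset.mem_sub.1 hd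
    have h1 := sub_ne_rest hx hy
    have h2 := sub_ne_rest hy hx
    have h3 := (mem_rest.1 hx).1
    have h4 := (mem_rest.1 hy).1
    simp only [Finset.mem_erase, Finset.mem_Icc]
    omega
  have hs := Finset.card_le_card hsum
  have hd := Finset.card_le_card hdiff
  rw [Finset.card_erase_of_mem (by simp only [Finset.mem_Icc]; omega), Int.card_Icc] at hs
  rw [Finset.card_erase_of_mem (by simp only [Finset.mem_erase, Finset.mem_Icc]; omega),
    Finset.card_erase_of_mem (by simp only [Finset.mem_Icc]; omega), Int.card_Icc] at hd
  unfold MSTD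
  omega

theorem stmt7 : ∃ N : ℕ, 0 < N ∧ ∀ r : ℤ, (N : ℤ) ≤ r →
    ∃ A B C : Finset ℤ, MSTD A ∧ MSTD B ∧ MSTD C ∧
      Disjoint A B ∧ Disjoint A C ∧ Disjoint B C ∧
      A ∪ B ∪ C = Finset.Icc 1 r := by
  refine ⟨100, by norm_num, fun r hr => ?_⟩
  have hr' : (100 : ℤ) ≤ r := by exact_mod_cast hr
  refine ⟨coreAt 4, coreAt (r - 16), rest r, mstd_coreAt _, mstd_coreAt _, mstd_rest hr',
    ?_, ?_, ?_, ?_⟩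
  · rw [Finset.disjoint_left]
    intro x hx hy
    rw [mem_coreAt] at hx hy
    omega
  · rw [rest]
    exact Finset.disjoint_sdiff.mono_left Finset.subset_union_left
  · rw [rest]
    exact Finset.disjoint_sdiff.mono_left Finset.subset_union_right
  · rw [rest]
    refine Finset.union_sdiff_of_subset fun x hx => ?_
    rw [Finset.mem_union, mem_coreAt, mem_coreAt] at hx
    rw [Finset.mem_Icc]
    omega
end

section
/- For every integer k ≥ 2, there exists a positive integer N such that for every integer r ≥ N, the interval [1,r] can be partitioned into exactly k pairwise disjoint MSTD subsets whose union is [1,r]. Consequently there is a smallest such integer R(k). -/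
/-!
Concatenating a partition of `[1,r]` with a translate of a partition of `[1,s]` shows that it
suffices to treat `k = 2` and `k = 3`, because every `k ≥ 2` is obtained from one of these by
repeatedly adding `2`.

For `k = 2, 3`, work in `[0,n]` with `n` large, and split it into `setA n`, `setB n C` and `C`,
where `C` is empty or a copy of Conway's MSTD set. The first and last 18 points are distributed
between `A` and `B` by two fixed patterns, chosen so that

* `A` misses the differences `±(n - 15)` but has all sums in `[0, 2n]`;
* `B`, whose hull is `[4, n - 4]`, misses `±(n - 15)` but has all sums in `[8, 2n - 8]`.

Extreme sums come from points in or next to the fringes. For the other sums (`add_of_window`) it is enough that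
the set contains an interval of length `h + 1` near each end and meets every window of `h + 1`
consecutive integers in between: `h = 1` for `A`, which contains the odd numbers of the middle,
and `h = 3` for `B`, which contains the multiples of `4` there. As `C` is a subset of `4ℤ + 2` in
the middle, it can be removed from `B` without harm.
-/

open Finset Pointwise

/-- `[1,r]` can be partitioned into exactly `k` pairwise disjoint MSTD subsets. -/
def KDecomp (k : ℕ) (r : ℤ) : Prop :=
  ∃ f : Fin k → Finset ℤ, (∀ i, MSTD (f i)) ∧
    (∀ i j, i ≠ j → Disjoint (f i) (f j)) ∧
    Finset.univ.biUnion f = Finset.Icc 1 r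

/-! ### Translation and concatenation -/

lemma mstd_add_singleton {A : Finset ℤ} (hA : MSTD A) (t : ℤ) : MSTD (A + {t}) := by
  unfold MSTD at *
  have h1 : (A + {t}) - (A + {t}) = A - A := by
    rw [add_sub_add_comm, Finset.singleton_sub_singleton, sub_self]
    exact add_zero (A - A)
  have h2 : (A + {t}) + (A + {t}) = (A + A) + {t + t} := by
    rw [add_add_add_comm]; simp
  rw [h1, h2, Finset.card_add_singleton]
  exact hA

lemma mem_add_singleton_iff {A : Finset ℤ} {t x : ℤ} : x ∈ A + {t} ↔ x - t ∈ A := by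
  simp only [Finset.mem_add, Finset.mem_singleton]
  constructor
  · rintro ⟨y, hy, z, rfl, rfl⟩
    simpa using hy
  · intro h
    exact ⟨x - t, h, t, rfl, by ring⟩

lemma kdecomp_shift {k : ℕ} {n : ℤ} (f : Fin k → Finset ℤ) (hf : ∀ i, MSTD (f i))
    (hd : ∀ i j, i ≠ j → Disjoint (f i) (f j))
    (hu : ∀ x, (∃ i, x ∈ f i) ↔ 0 ≤ x ∧ x ≤ n) : KDecomp k (n + 1) := by
  refine ⟨fun i => f i + {1}, fun i => mstd_add_singleton (hf i) 1, ?_, ?_⟩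
  · intro i j hij
    rw [Finset.disjoint_left]
    intro x hx hx'
    rw [mem_add_singleton_iff] at hx hx'
    exact Finset.disjoint_left.1 (hd i j hij) hx hx'
  · ext x
    simp only [Finset.mem_biUnion, Finset.mem_univ, true_and, mem_add_singleton_iff, hu,
      Finset.mem_Icc]
    omega

lemma kdecomp_add {k l : ℕ} {r s : ℤ} (hr : 0 ≤ r) (hs : 0 ≤ s) (h1 : KDecomp k r)
    (h2 : KDecomp l s) : KDecomp (k + l) (r + s) := by
  obtain ⟨f, hf, hfd, hfu⟩ := h1
  obtain ⟨g, hg, hgd, hgu⟩ := h2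
  have hf' : ∀ x, (∃ i, x ∈ f i) ↔ 1 ≤ x ∧ x ≤ r := by
    intro x
    have := Finset.ext_iff.1 hfu x
    simpa using this
  have hg' : ∀ x, (∃ i, x ∈ g i) ↔ 1 ≤ x ∧ x ≤ s := by
    intro x
    have := Finset.ext_iff.1 hgu x
    simpa using this
  have hfg : ∀ i j, Disjoint (f i) (g j + {r}) := by
    intro i j
    rw [Finset.disjoint_left]
    intro x hx hx'
    rw [mem_add_singleton_iff] at hx'
    have a := (hf' x).1 ⟨i, hx⟩
    have b := (hg' _).1 ⟨j, hx'⟩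
    omega
  refine ⟨Fin.append f (fun i => g i + {r}), ?_, ?_, ?_⟩
  · intro i
    refine Fin.addCases (fun i => ?_) (fun i => ?_) i
    · simpa using hf i
    · simpa using mstd_add_singleton (hg i) r
  · intro i j
    refine Fin.addCases (fun i => ?_) (fun i => ?_) i <;>
      refine Fin.addCases (fun j => ?_) (fun j => ?_) j <;> intro hij
    · simpa using hfd i j (fun h => hij (by rw [h]))
    · simpa using hfg i j
    · simpa using (hfg j i).symm
    · have := hgd i j (fun h => hij (by rw [h]))
      simp only [Fin.append_right]
      rw [Finset.disjoint_left] at this ⊢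
      intro x hx hx'
      rw [mem_add_singleton_iff] at hx hx'
      exact this hx hx'
  · ext x
    simp only [Finset.mem_biUnion, Finset.mem_univ, true_and, Finset.mem_Icc]
    have hsplit : (∃ i, x ∈ Fin.append f (fun i => g i + {r}) i) ↔
        (∃ i, x ∈ f i) ∨ ∃ i, x - r ∈ g i := by
      constructor
      · rintro ⟨i, hi⟩
        induction i using Fin.addCases with
        | left i => exact Or.inl ⟨i, by simpa using hi⟩
        | right i => exact Or.inr ⟨i, by simpa [mem_add_singleton_iff] using hi⟩
      · rintro (⟨i, hi⟩ | ⟨i, hi⟩)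
        · exact ⟨Fin.castAdd l i, by simpa using hi⟩
        · exact ⟨Fin.natAdd k i, by simpa [mem_add_singleton_iff] using hi⟩
    rw [hsplit, hf', hg']
    omega

/-! ### A criterion for being MSTD -/

/-- A set with hull `[lo, hi]` that has every possible sum but misses one difference `d` (hence
also `-d`) is MSTD. -/
lemma mstd_of_full_sums {A : Finset ℤ} {lo hi d : ℤ} (hA : ∀ x ∈ A, lo ≤ x ∧ x ≤ hi)
    (hd : 0 < d) (hd' : d ≤ hi - lo) (hmiss : ∀ x ∈ A, ∀ y ∈ A, x - y ≠ d)
    (hsum : ∀ s, 2 * lo ≤ s → s ≤ 2 * hi → ∃ x ∈ A, ∃ y ∈ A, x + y = s) : MSTD A := by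
  unfold MSTD
  have h1 : A - A ⊆ (Finset.Icc (lo - hi) (hi - lo)).erase d := by
    intro z hz
    obtain ⟨x, hx, y, hy, rfl⟩ := Finset.mem_sub.1 hz
    have := hA x hx
    have := hA y hy
    rw [Finset.mem_erase, Finset.mem_Icc]
    exact ⟨hmiss x hx y hy, by omega, by omega⟩
  have h2 : Finset.Icc (2 * lo) (2 * hi) ⊆ A + A := by
    intro s hs
    rw [Finset.mem_Icc] at hs
    exact Finset.mem_add.2 (hsum s hs.1 hs.2)
  have c1 := Finset.card_le_card h1
  have c2 := Finset.card_le_card h2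
  rw [Finset.card_erase_of_mem (by rw [Finset.mem_Icc]; omega), Int.card_Icc] at c1
  rw [Int.card_Icc] at c2
  omega

/-- If `A` contains `[a, a+h]` and `[c, c+h]` and meets each window `[t, t+h]` with `a ≤ t ≤ c`,
then every integer of `[2a, 2(c+h)]` is a sum of two elements of `A`. -/
lemma add_of_window {A : Finset ℤ} {a c h : ℤ} (_ : 0 ≤ h)
    (ha : ∀ x, a ≤ x → x ≤ a + h → x ∈ A) (hc : ∀ x, c ≤ x → x ≤ c + h → x ∈ A)
    (hw : ∀ t, a ≤ t → t ≤ c → ∃ x ∈ A, t ≤ x ∧ x ≤ t + h)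
    (s : ℤ) (h1 : 2 * a ≤ s) (h2 : s ≤ 2 * (c + h)) : ∃ x ∈ A, ∃ y ∈ A, x + y = s := by
  rcases lt_or_ge s (2 * a + h) with h3 | h3
  · exact ⟨a, ha _ (by omega) (by omega), s - a, ha _ (by omega) (by omega), by ring⟩
  rcases le_or_gt s (a + c + h) with h4 | h4
  · obtain ⟨x, hx, hx1, hx2⟩ := hw (s - a - h) (by omega) (by omega)
    exact ⟨x, hx, s - x, ha _ (by omega) (by omega), by ring⟩
  rcases le_or_gt s (2 * c + h) with h5 | h5
  · obtain ⟨x, hx, hx1, hx2⟩ := hw (s - c - h) (by omega) (by omega)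
    exact ⟨x, hx, s - x, hc _ (by omega) (by omega), by ring⟩
  · exact ⟨c + h, hc _ (by omega) (by omega), s - (c + h), hc _ (by omega) (by omega), by ring⟩

/-! ### The two large sets -/

/-- The first set of the partition of `[0,n]`: two fixed fringes and the odd numbers of
`[18, n-18]`. -/
noncomputable def setA (n : ℤ) : Finset ℤ := (Finset.Icc 0 n).filter fun x =>
  (x ≤ 3 ∨ x = 6 ∨ (9 ≤ x ∧ x ≤ 11) ∨ x = 16 ∨ x = 17) ∨
  (n - x ≤ 3 ∨ n - x = 7 ∨ n - x = 8 ∨ n - x = 10 ∨ n - x = 11 ∨ n - x = 16 ∨ n - x = 17) ∨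
  (18 ≤ x ∧ 18 ≤ n - x ∧ x % 2 = 1)

/-- The second set of the partition of `[0,n]`: the complementary fringes and the even numbers of
`[18, n-18]` outside `C`. -/
noncomputable def setB (n : ℤ) (C : Finset ℤ) : Finset ℤ := (Finset.Icc 0 n).filter fun x =>
  (x = 4 ∨ x = 5 ∨ x = 7 ∨ x = 8 ∨ (12 ≤ x ∧ x ≤ 15)) ∨
  ((4 ≤ n - x ∧ n - x ≤ 6) ∨ n - x = 9 ∨ (12 ≤ n - x ∧ n - x ≤ 15)) ∨
  (18 ≤ x ∧ 18 ≤ n - x ∧ x % 2 = 0 ∧ x ∉ C)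

lemma lowA : ∀ s ∈ Finset.Icc (0 : ℤ) 31,
    ∃ x ∈ ({0, 1, 2, 3, 6, 9, 10, 11, 16, 17, 19, 21} : Finset ℤ),
    ∃ y ∈ ({0, 1, 2, 3, 6, 9, 10, 11, 16, 17, 19, 21} : Finset ℤ), x + y = s := by decide

/-- The parameter `e` is the parity of the distances from `n` to the odd numbers of the middle:
the two middle points of `A` needed here are at distance `18, 20` or `19, 21` from `n`. -/
lemma highA : ∀ e ∈ Finset.Icc (0 : ℤ) 1, ∀ s ∈ Finset.Icc (0 : ℤ) 31,
    ∃ x ∈ ({0, 1, 2, 3, 7, 8, 10, 11, 16, 17, 18 + e, 20 + e} : Finset ℤ),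
    ∃ y ∈ ({0, 1, 2, 3, 7, 8, 10, 11, 16, 17, 18 + e, 20 + e} : Finset ℤ), x + y = s := by
  decide

lemma lowB : ∀ s ∈ Finset.Icc (8 : ℤ) 23, ∃ x ∈ ({4, 5, 7, 8, 12, 13, 14, 15} : Finset ℤ),
    ∃ y ∈ ({4, 5, 7, 8, 12, 13, 14, 15} : Finset ℤ), x + y = s := by decide

lemma highB : ∀ s ∈ Finset.Icc (8 : ℤ) 23, ∃ x ∈ ({4, 5, 6, 9, 12, 13, 14, 15} : Finset ℤ),
    ∃ y ∈ ({4, 5, 6, 9, 12, 13, 14, 15} : Finset ℤ), x + y = s := by decide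

lemma mstd_setA {n : ℤ} (hn : 199 ≤ n) : MSTD (setA n) := by
  refine mstd_of_full_sums (lo := 0) (hi := n) (d := n - 15) ?_ (by omega) (by omega) ?_ ?_
  · intro x hx
    exact Finset.mem_Icc.1 (Finset.mem_filter.1 hx).1
  · intro x hx y hy
    simp only [setA, Finset.mem_filter, Finset.mem_Icc] at hx hy
    omega
  intro s hs hs'
  rcases lt_or_ge s 32 with h1 | h1
  · obtain ⟨x, hx, y, hy, h⟩ := lowA s (Finset.mem_Icc.2 ⟨by omega, by omega⟩)
    simp only [Finset.mem_insert, Finset.mem_singleton] at hx hy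
    refine ⟨x, ?_, y, ?_, h⟩ <;> simp only [setA, Finset.mem_filter, Finset.mem_Icc] <;> omega
  rcases lt_or_ge (2 * n - s) 32 with h2 | h2
  · obtain ⟨x, hx, y, hy, h⟩ := highA ((n + 1) % 2) (Finset.mem_Icc.2 ⟨by omega, by omega⟩)
      (2 * n - s) (Finset.mem_Icc.2 ⟨by omega, by omega⟩)
    simp only [Finset.mem_insert, Finset.mem_singleton] at hx hy
    refine ⟨n - x, ?_, n - y, ?_, by omega⟩ <;>
      simp only [setA, Finset.mem_filter, Finset.mem_Icc] <;> omega
  refine add_of_window (a := 16) (c := n - 17) (h := 1) (by omega) ?_ ?_ ?_ s (by omega) (by omega)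
  · intro x _ _
    simp only [setA, Finset.mem_filter, Finset.mem_Icc]; omega
  · intro x _ _
    simp only [setA, Finset.mem_filter, Finset.mem_Icc]; omega
  · intro t _ _
    rcases Int.emod_two_eq_zero_or_one t with h | h
    · refine ⟨t + 1, ?_, by omega, by omega⟩
      simp only [setA, Finset.mem_filter, Finset.mem_Icc]; omega
    · refine ⟨t, ?_, by omega, by omega⟩
      simp only [setA, Finset.mem_filter, Finset.mem_Icc]; omega

lemma mstd_setB {n : ℤ} (hn : 199 ≤ n) {C : Finset ℤ}
    (hC : ∀ x ∈ C, 30 ≤ x ∧ x ≤ 86 ∧ x % 4 = 2) :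
    MSTD (setB n C) := by
  refine mstd_of_full_sums (lo := 4) (hi := n - 4) (d := n - 15) ?_ (by omega) (by omega) ?_ ?_
  · intro x hx
    simp only [setB, Finset.mem_filter, Finset.mem_Icc] at hx
    omega
  · intro x hx y hy
    simp only [setB, Finset.mem_filter, Finset.mem_Icc] at hx hy
    omega
  intro s hs hs'
  rcases lt_or_ge s 24 with h1 | h1
  · obtain ⟨x, hx, y, hy, h⟩ := lowB s (Finset.mem_Icc.2 ⟨by omega, by omega⟩)
    simp only [Finset.mem_insert, Finset.mem_singleton] at hx hy
    refine ⟨x, ?_, y, ?_, h⟩ <;> simp only [setB, Finset.mem_filter, Finset.mem_Icc] <;> omega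
  rcases lt_or_ge (2 * n - s) 24 with h2 | h2
  · obtain ⟨x, hx, y, hy, h⟩ := highB (2 * n - s) (Finset.mem_Icc.2 ⟨by omega, by omega⟩)
    simp only [Finset.mem_insert, Finset.mem_singleton] at hx hy
    refine ⟨n - x, ?_, n - y, ?_, by omega⟩ <;>
      simp only [setB, Finset.mem_filter, Finset.mem_Icc] <;> omega
  refine add_of_window (a := 12) (c := n - 15) (h := 3) (by omega) ?_ ?_ ?_ s (by omega) (by omega)
  · intro x _ _
    simp only [setB, Finset.mem_filter, Finset.mem_Icc]; omega
  · intro x _ _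
    simp only [setB, Finset.mem_filter, Finset.mem_Icc]; omega
  · intro t _ _
    rcases le_or_gt t 15 with h | h
    · refine ⟨t, ?_, by omega, by omega⟩
      simp only [setB, Finset.mem_filter, Finset.mem_Icc]; omega
    rcases le_or_gt (n - 18) t with h' | h'
    · refine ⟨t + 3, ?_, by omega, by omega⟩
      simp only [setB, Finset.mem_filter, Finset.mem_Icc]; omega
    -- Any even middle point below 30 or above 86 will do; in between, a multiple of 4 avoids `C`.
    obtain ⟨x, hx, hx1, hx2⟩ : ∃ x, (18 ≤ x ∧ 18 ≤ n - x ∧ x % 2 = 0 ∧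
        (x < 30 ∨ 86 < x ∨ x % 4 = 0)) ∧ t ≤ x ∧ x ≤ t + 3 := by
      rcases le_or_gt t 17 with h3 | h3
      · exact ⟨18, by omega, by omega, by omega⟩
      rcases le_or_gt t 100 with h4 | h4
      · exact ⟨4 * ((t + 3) / 4), by omega, by omega, by omega⟩
      · exact ⟨2 * ((t + 1) / 2), by omega, by omega, by omega⟩
    have hxC : x ∉ C := fun hxC => by
      have := hC x hxC
      omega
    refine ⟨x, ?_, hx1, hx2⟩
    simp only [setB, Finset.mem_filter, Finset.mem_Icc]
    exact ⟨by omega, Or.inr (Or.inr ⟨hx.1, hx.2.1, hx.2.2.1, hxC⟩)⟩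

/-! ### Small `k` -/

/-- Conway's set `{0, 2, 3, 4, 7, 11, 12, 14}`, multiplied by `4` and translated by `30`. -/
def conway : Finset ℤ := {30, 38, 42, 46, 58, 74, 78, 86}

lemma mstd_conway : MSTD conway := by
  unfold MSTD conway
  decide

lemma conway_spec : ∀ x ∈ conway, 30 ≤ x ∧ x ≤ 86 ∧ x % 4 = 2 := by
  unfold conway
  decide

lemma disjoint_setA_setB {n : ℤ} (hn : 199 ≤ n) (C : Finset ℤ) :
    Disjoint (setA n) (setB n C) := by
  rw [Finset.disjoint_left]
  intro x hx hx'
  simp only [setA, setB, Finset.mem_filter, Finset.mem_Icc] at hx hx'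
  omega

lemma kdecomp_two {r : ℤ} (hr : 200 ≤ r) : KDecomp 2 r := by
  obtain ⟨n, rfl⟩ : ∃ n, r = n + 1 := ⟨r - 1, by ring⟩
  have hAB := disjoint_setA_setB (n := n) (by omega) ∅
  refine kdecomp_shift ![setA n, setB n ∅] ?_ ?_ ?_
  · simpa [Fin.forall_fin_succ] using
      ⟨mstd_setA (n := n) (by omega), mstd_setB (n := n) (C := ∅) (by omega) (by simp)⟩
  · simp [Fin.forall_fin_succ, hAB, hAB.symm]
  · intro x
    simp only [Fin.exists_fin_two, Matrix.cons_val_zero, Matrix.cons_val_one, setA, setB,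
      Finset.mem_filter, Finset.mem_Icc, Finset.notMem_empty, not_false_eq_true, and_true]
    omega

lemma kdecomp_three {r : ℤ} (hr : 200 ≤ r) : KDecomp 3 r := by
  obtain ⟨n, rfl⟩ : ∃ n, r = n + 1 := ⟨r - 1, by ring⟩
  have hAB := disjoint_setA_setB (n := n) (by omega) conway
  have hAC : Disjoint (setA n) conway := by
    rw [Finset.disjoint_left]
    intro x hx hx'
    have := conway_spec x hx'
    simp only [setA, Finset.mem_filter, Finset.mem_Icc] at hx
    omega
  have hBC : Disjoint (setB n conway) conway := by
    rw [Finset.disjoint_left]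
    intro x hx hx'
    have := conway_spec x hx'
    simp only [setB, Finset.mem_filter, Finset.mem_Icc] at hx
    rcases hx.2 with h | h | h
    · omega
    · omega
    · exact h.2.2.2 hx'
  refine kdecomp_shift ![setA n, setB n conway, conway] ?_ ?_ ?_
  · simpa [Fin.forall_fin_succ] using
      ⟨mstd_setA (n := n) (by omega), mstd_setB (n := n) (C := conway) (by omega) conway_spec, mstd_conway⟩
  · simp [Fin.forall_fin_succ, hAB, hAB.symm, hAC, hAC.symm, hBC, hBC.symm]
  · intro x
    have h : (∃ i, x ∈ (![setA n, setB n conway, conway] : Fin 3 → Finset ℤ) i) ↔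
        x ∈ setA n ∨ x ∈ setB n conway ∨ x ∈ conway := by
      simp [Fin.exists_fin_succ]
    rw [h]
    have := conway_spec x
    simp only [setA, setB, Finset.mem_filter, Finset.mem_Icc]
    by_cases hx : x ∈ conway
    · have := this hx
      simp only [hx, or_true, true_iff]
      omega
    · simp only [hx, or_false, not_false_eq_true, and_true]
      omega

lemma exists_kdecomp (k : ℕ) : ∃ N : ℤ, 0 < N ∧ ∀ r, N ≤ r → KDecomp (k + 2) r := by
  induction k using Nat.twoStepInduction with
  | zero => exact ⟨200, by norm_num, fun r hr => kdecomp_two hr⟩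
  | one => exact ⟨200, by norm_num, fun r hr => kdecomp_three hr⟩
  | more k ih _ =>
    obtain ⟨N, hN, h⟩ := ih
    refine ⟨N + 200, by omega, fun r hr => ?_⟩
    have := kdecomp_add (by omega) (by norm_num) (h (r - 200) (by omega))
      (kdecomp_two (r := 200) le_rfl)
    simpa using this

theorem stmt8 (k : ℕ) (hk : 2 ≤ k) :
    ∃ R : ℤ, 0 < R ∧ (∀ r : ℤ, R ≤ r → KDecomp k r) ∧
      ∀ R' : ℤ, 0 < R' → (∀ r : ℤ, R' ≤ r → KDecomp k r) → R ≤ R' := by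
  obtain ⟨j, rfl⟩ : ∃ j, k = j + 2 := ⟨k - 2, by omega⟩
  obtain ⟨N, hN, h⟩ := exists_kdecomp j
  obtain ⟨R, ⟨hR, hR'⟩, hmin⟩ := Int.exists_least_of_bdd
    (P := fun R : ℤ => 0 < R ∧ ∀ r : ℤ, R ≤ r → KDecomp (j + 2) r)
    ⟨0, fun z hz => hz.1.le⟩ ⟨N, hN, h⟩
  exact ⟨R, hR, hR', fun R' h1 h2 => hmin R' ⟨h1, h2⟩⟩
end

section
/- For every even integer k ≥ 2 and every integer r ≥ 10k, the interval [1,r] can be partitioned into exactly k pairwise disjoint MSTD subsets whose union is [1,r]. -/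
/-!
The heart of the matter is that `[1, r]` splits into *two* MSTD sets for every `r ≥ 20`.  For even
`k`, cut `[1, r]` into `k / 2 - 1` intervals of length `20` and one interval of length at least
`20`, and split each of them in two; translates of MSTD sets are MSTD (`MSTD.affine`).

For `n ≥ 26` the splitting of `[1, n]` rests on a criterion (`mstd_of_fringes`).  Let
`C ⊆ [1, n - 3]` contain `1, 2, 3, 6, 9, 10` and `n - 7, n - 6, n - 4, n - 3`, avoid `4, 5, 7, 8`
and `n - 10, n - 9, n - 8, n - 5`, and meet every pair of consecutive integers in between.
Then neither of `±(n - 11)` is a difference of elements of `C`: two elements `n - 11` apart would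
have to be one of `1, 2, 3, 6` and one of `n - 10, n - 9, n - 8, n - 5`.
On the other hand every integer in `[2, 2n - 6]` except possibly
`n + 1` is a sum, because two consecutive elements of `C` plus a pair-meeting set give a full
interval.  So `|C - C| ≤ 2n - 9` while `|C + C| ≥ 2n - 8`.

The set `lowPart n`, which alternates between the two fringes, satisfies the criterion, and so does
the reflection `x ↦ n + 1 - x` of its complement in `[1, n]`, because the two fringes are swapped
by reflection and complementation.  The cases `20 ≤ n ≤ 25` are finite computations.
-/

open Finset Pointwise

/-- Images under translations (`e = 1`) and reflections (`e = -1`) of MSTD sets are MSTD. -/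
lemma MSTD.affine {A : Finset ℤ} (hA : MSTD A) (c e : ℤ) (he : e = 1 ∨ e = -1) :
    MSTD (A.image fun x => c + e * x) := by
  have hsum : (A.image fun x => c + e * x) + (A.image fun x => c + e * x)
      = (A + A).image fun s => 2 * c + e * s := by
    ext y
    simp only [Finset.mem_add, Finset.mem_image]
    constructor
    · rintro ⟨_, ⟨a, ha, rfl⟩, _, ⟨b, hb, rfl⟩, rfl⟩
      exact ⟨a + b, ⟨a, ha, b, hb, rfl⟩, by ring⟩
    · rintro ⟨_, ⟨a, ha, b, hb, rfl⟩, rfl⟩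
      exact ⟨_, ⟨a, ha, rfl⟩, _, ⟨b, hb, rfl⟩, by ring⟩
  have hdiff : (A.image fun x => c + e * x) - (A.image fun x => c + e * x)
      = (A - A).image fun d => e * d := by
    ext y
    simp only [Finset.mem_sub, Finset.mem_image]
    constructor
    · rintro ⟨_, ⟨a, ha, rfl⟩, _, ⟨b, hb, rfl⟩, rfl⟩
      exact ⟨a - b, ⟨a, ha, b, hb, rfl⟩, by ring⟩
    · rintro ⟨_, ⟨a, ha, b, hb, rfl⟩, rfl⟩
      exact ⟨_, ⟨a, ha, rfl⟩, _, ⟨b, hb, rfl⟩, by ring⟩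
  unfold MSTD at *
  rw [hsum, hdiff, Finset.card_image_of_injective, Finset.card_image_of_injective]
  · exact hA
  · intro x y h
    rcases he with rfl | rfl <;> simp at h <;> omega
  · intro x y h
    rcases he with rfl | rfl <;> simp at h <;> omega

/-- A set with the fringes described at the top of the file, meeting every pair of consecutive
integers in its middle, is MSTD. -/
lemma mstd_of_fringes (n : ℤ) (hn : 26 ≤ n) (C : Finset ℤ)
    (hrange : ∀ x ∈ C, 1 ≤ x ∧ x ≤ n - 3)
    (hleft : ∀ x, x = 1 ∨ x = 2 ∨ x = 3 ∨ x = 6 ∨ x = 9 ∨ x = 10 → x ∈ C)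
    (hright : ∀ x, x = n - 7 ∨ x = n - 6 ∨ x = n - 4 ∨ x = n - 3 → x ∈ C)
    (hleft' : ∀ x ∈ C, x ≠ 4 ∧ x ≠ 5 ∧ x ≠ 7 ∧ x ≠ 8)
    (hright' : ∀ x ∈ C, x ≠ n - 10 ∧ x ≠ n - 9 ∧ x ≠ n - 8 ∧ x ≠ n - 5)
    (hpair : ∀ x, 8 ≤ x → x ≤ n - 12 → x ∈ C ∨ x + 1 ∈ C) : MSTD C := by
  have hdiff : C - C ⊆ ((Icc (-(n - 4)) (n - 4)).erase (n - 11)).erase (-(n - 11)) := by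
    intro d hd
    obtain ⟨a, ha, b, hb, rfl⟩ := Finset.mem_sub.1 hd
    have h1 := hrange a ha
    have h2 := hrange b hb
    have h3 := hleft' a ha
    have h4 := hleft' b hb
    have h5 := hright' a ha
    have h6 := hright' b hb
    simp only [Finset.mem_erase, Finset.mem_Icc]
    refine ⟨?_, ?_, ?_, ?_⟩ <;> omega
  -- A pair of consecutive elements of `C` yields an interval of sums.
  have hladder : ∀ p x, p ∈ C → p + 1 ∈ C → 8 ≤ x - (p + 1) → x - (p + 1) ≤ n - 12 →
      x ∈ C + C := by
    intro p x hp hp' h1 h2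
    rcases hpair _ h1 h2 with h | h
    · exact Finset.mem_add.2 ⟨_, hp', _, h, by ring⟩
    · exact Finset.mem_add.2 ⟨_, hp, _, h, by ring⟩
  have hll : ∀ a b x, (a = 1 ∨ a = 2 ∨ a = 3 ∨ a = 6 ∨ a = 9 ∨ a = 10) →
      (b = 1 ∨ b = 2 ∨ b = 3 ∨ b = 6 ∨ b = 9 ∨ b = 10) → x = a + b → x ∈ C + C :=
    fun a b x ha hb h => Finset.mem_add.2 ⟨a, hleft a ha, b, hleft b hb, h.symm⟩
  have hlr : ∀ a b x, (a = 1 ∨ a = 2 ∨ a = 3 ∨ a = 6 ∨ a = 9 ∨ a = 10) →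
      (b = n - 7 ∨ b = n - 6 ∨ b = n - 4 ∨ b = n - 3) → x = a + b → x ∈ C + C :=
    fun a b x ha hb h => Finset.mem_add.2 ⟨a, hleft a ha, b, hright b hb, h.symm⟩
  have hrr : ∀ a b x, (a = n - 7 ∨ a = n - 6 ∨ a = n - 4 ∨ a = n - 3) →
      (b = n - 7 ∨ b = n - 6 ∨ b = n - 4 ∨ b = n - 3) → x = a + b → x ∈ C + C :=
    fun a b x ha hb h => Finset.mem_add.2 ⟨a, hright a ha, b, hright b hb, h.symm⟩
  have hsum : (Icc 2 (2 * n - 6)).erase (n + 1) ⊆ C + C := by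
    intro x hx
    simp only [Finset.mem_erase, Finset.mem_Icc] at hx
    obtain ⟨hne, hlo, hhi⟩ := hx
    have hcases : x ≤ 4 ∨ (5 ≤ x ∧ x ≤ 6) ∨ (7 ≤ x ∧ x ≤ 9) ∨ (10 ≤ x ∧ x ≤ n - 10) ∨
        x = n - 9 ∨ (n - 8 ≤ x ∧ x ≤ n - 7) ∨ (n - 6 ≤ x ∧ x ≤ n - 4) ∨
        (n - 3 ≤ x ∧ x ≤ n - 1) ∨ x = n ∨ (n + 2 ≤ x ∧ x ≤ n + 4) ∨
        (n + 5 ≤ x ∧ x ≤ 2 * n - 15) ∨ (2 * n - 14 ≤ x ∧ x ≤ 2 * n - 13) ∨ x = 2 * n - 12 ∨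
        (2 * n - 11 ≤ x ∧ x ≤ 2 * n - 10) ∨ x = 2 * n - 9 ∨ x = 2 * n - 8 ∨
        2 * n - 7 ≤ x := by omega
    rcases hcases with h | h | h | h | h | h | h | h | h | h | h | h | h | h | h | h | h
    · exact hll 1 (x - 1) x (by omega) (by omega) (by omega)
    · exact hll 3 (x - 3) x (by omega) (by omega) (by omega)
    · exact hll 6 (x - 6) x (by omega) (by omega) (by omega)
    · exact hladder 1 x (hleft _ (by omega)) (hleft _ (by omega)) (by omega) (by omega)
    · exact hladder 2 x (hleft _ (by omega)) (hleft _ (by omega)) (by omega) (by omega)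
    · exact hladder 9 x (hleft _ (by omega)) (hleft _ (by omega)) (by omega) (by omega)
    · exact hlr (x - (n - 7)) (n - 7) x (by omega) (by omega) (by omega)
    · exact hlr (x - (n - 4)) (n - 4) x (by omega) (by omega) (by omega)
    · exact hlr 3 (n - 3) x (by omega) (by omega) (by omega)
    · exact hladder (n - 7) x (hright _ (by omega)) (hright _ (by omega)) (by omega) (by omega)
    · exact hladder (n - 4) x (hright _ (by omega)) (hright _ (by omega)) (by omega) (by omega)
    · exact hrr (n - 7) (x - (n - 7)) x (by omega) (by omega) (by omega)
    · exact hrr (n - 6) (n - 6) x (by omega) (by omega) (by omega)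
    · exact hrr (n - 7) (x - (n - 7)) x (by omega) (by omega) (by omega)
    · exact hrr (n - 6) (n - 3) x (by omega) (by omega) (by omega)
    · exact hrr (n - 4) (n - 4) x (by omega) (by omega) (by omega)
    · exact hrr (n - 3) (x - (n - 3)) x (by omega) (by omega) (by omega)
  have hd := Finset.card_le_card hdiff
  have hs := Finset.card_le_card hsum
  rw [Finset.card_erase_of_mem (by simp only [Finset.mem_erase, Finset.mem_Icc]; omega),
    Finset.card_erase_of_mem (by simp only [Finset.mem_Icc]; omega), Int.card_Icc] at hd
  rw [Finset.card_erase_of_mem (by simp only [Finset.mem_Icc]; omega), Int.card_Icc] at hs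
  unfold MSTD
  omega

/-- One of the two sets into which `[1, n]` is split when `n ≥ 22`: two
fixed fringes, with the odd integers between them. -/
noncomputable def lowPart (n : ℤ) : Finset ℤ :=
  (Icc 1 n).filter fun x => (x = 1 ∨ x = 2 ∨ x = 3 ∨ x = 6 ∨ x = 9 ∨ x = 10) ∨
    (11 ≤ x ∧ x ≤ n - 11 ∧ x % 2 = 1) ∨ (x = n - 7 ∨ x = n - 6 ∨ x = n - 4 ∨ x = n - 3)

lemma mstd_lowPart (n : ℤ) (hn : 26 ≤ n) : MSTD (lowPart n) := by
  apply mstd_of_fringes n hn <;> intro x <;> simp only [lowPart, Finset.mem_filter, Finset.mem_Icc]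
    <;> omega

lemma mstd_sdiff_lowPart (n : ℤ) (hn : 26 ≤ n) : MSTD (Icc 1 n \ lowPart n) := by
  have hmem : ∀ x, x ∈ (Icc 1 n \ lowPart n).image (fun x => n + 1 + -1 * x) ↔
      n + 1 - x ∈ Icc 1 n \ lowPart n := by
    intro x
    rw [Finset.mem_image]
    constructor
    · rintro ⟨y, hy, rfl⟩
      convert hy using 1
      ring
    · exact fun h => ⟨_, h, by ring⟩
  have h : MSTD ((Icc 1 n \ lowPart n).image fun x => n + 1 + -1 * x) := by
    apply mstd_of_fringes n hn <;> intro x <;> simp only [hmem] <;>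
      simp only [lowPart, Finset.mem_sdiff, Finset.mem_filter, Finset.mem_Icc] <;> omega
  convert h.affine (n + 1) (-1) (Or.inr rfl) using 1
  ext x
  simp only [Finset.image_image, Finset.mem_image, Function.comp_apply]
  exact ⟨fun hx => ⟨x, hx, by ring⟩, fun ⟨y, hy, hyx⟩ => by rwa [← hyx, show
    n + 1 + -1 * (n + 1 + -1 * y) = y by ring]⟩

/-- Every interval `[1, n]` with `n ≥ 20` splits into two MSTD sets. -/
lemma exists_mstd_split (n : ℤ) (hn : 20 ≤ n) :
    ∃ A ⊆ Icc 1 n, MSTD A ∧ MSTD (Icc 1 n \ A) := by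
  rcases le_or_gt 26 n with h | h
  · exact ⟨lowPart n, Finset.filter_subset _ _, mstd_lowPart n h, mstd_sdiff_lowPart n h⟩
  · unfold MSTD
    interval_cases n
    · exact ⟨{3, 5, 6, 7, 10, 14, 15, 17}, by decide +kernel⟩
    · exact ⟨{1, 4, 5, 6, 8, 11, 12, 16, 18, 19}, by decide +kernel⟩
    · exact ⟨lowPart 22, by decide +kernel⟩
    · exact ⟨lowPart 23, by decide +kernel⟩
    · exact ⟨lowPart 24, by decide +kernel⟩
    · exact ⟨lowPart 25, by decide +kernel⟩

/-- Two disjoint sets are added to a disjoint family in front. -/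
lemma extend_partition {k : ℕ} {f : Fin k → Finset ℤ} {A B S T : Finset ℤ}
    (hf : ∀ i, MSTD (f i)) (hdisj : ∀ i j, i ≠ j → Disjoint (f i) (f j))
    (hunion : Finset.univ.biUnion f = S) (hA : MSTD A) (hB : MSTD B) (hAB : Disjoint A B)
    (hT : A ∪ B = T) (hST : Disjoint S T) :
    ∃ g : Fin (k + 2) → Finset ℤ, (∀ i, MSTD (g i)) ∧
      (∀ i j, i ≠ j → Disjoint (g i) (g j)) ∧ Finset.univ.biUnion g = S ∪ T := by
  subst hT hunion
  have hfA : ∀ i, Disjoint (f i) A := fun i =>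
    hST.mono (Finset.subset_biUnion_of_mem f (Finset.mem_univ i)) Finset.subset_union_left
  have hfB : ∀ i, Disjoint (f i) B := fun i =>
    hST.mono (Finset.subset_biUnion_of_mem f (Finset.mem_univ i)) Finset.subset_union_right
  refine ⟨Fin.cons A (Fin.cons B f), ?_, ?_, ?_⟩
  · simp [Fin.forall_fin_succ, hA, hB, hf]
  · intro i j
    refine Fin.cases ?_ (fun i => Fin.cases ?_ (fun i => ?_) i) i <;>
    refine Fin.cases ?_ (fun j => Fin.cases ?_ (fun j => ?_) j) j <;>
    intro hij
    · exact absurd rfl hij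
    · exact hAB
    · exact (hfA j).symm
    · exact hAB.symm
    · exact absurd rfl hij
    · exact (hfB j).symm
    · exact hfA i
    · exact hfB i
    · exact hdisj i j fun h => hij (by rw [h])
  · ext x
    simp only [Finset.mem_biUnion, Finset.mem_univ, true_and, Finset.mem_union,
      Fin.exists_fin_succ, Fin.cons_zero, Fin.cons_succ]
    tauto

/-- The partition into `2 * (m + 1)` sets, by induction on `m`: the last `20` integers are
split off and divided in two. -/
lemma exists_partition (m : ℕ) : ∀ r : ℤ, 20 * ((m : ℤ) + 1) ≤ r →
    ∃ f : Fin (2 * m + 2) → Finset ℤ, (∀ i, MSTD (f i)) ∧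
      (∀ i j, i ≠ j → Disjoint (f i) (f j)) ∧ Finset.univ.biUnion f = Finset.Icc 1 r := by
  induction m with
  | zero =>
    intro r hr
    obtain ⟨A, hAr, hA, hB⟩ := exists_mstd_split r (by simpa using hr)
    have h := extend_partition (k := 0) (f := Fin.elim0) (S := ∅) (fun i => i.elim0)
      (fun i => i.elim0) rfl hA hB Finset.disjoint_sdiff (Finset.union_sdiff_of_subset hAr)
      (Finset.disjoint_empty_left _)
    rwa [Finset.empty_union] at h
  | succ m ih =>
    intro r hr
    push_cast at hr
    obtain ⟨f, hf, hdisj, hunion⟩ := ih (r - 20) (by linarith)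
    obtain ⟨A, hAr, hA, hB⟩ := exists_mstd_split 20 le_rfl
    have hinj : Function.Injective fun x : ℤ => r - 20 + 1 * x := by
      intro x y h
      simpa using h
    have hT : (A.image fun x => r - 20 + 1 * x) ∪ ((Icc 1 20 \ A).image fun x => r - 20 + 1 * x)
        = Icc (r - 19) r := by
      rw [← Finset.image_union, Finset.union_sdiff_of_subset hAr]
      ext x
      simp only [Finset.mem_image, Finset.mem_Icc]
      exact ⟨by rintro ⟨y, hy, rfl⟩; omega, fun h => ⟨x - (r - 20), by omega, by ring⟩⟩
    have h := extend_partition hf hdisj hunion (hA.affine (r - 20) 1 (Or.inl rfl))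
      (hB.affine (r - 20) 1 (Or.inl rfl))
      ((Finset.disjoint_image hinj).2 Finset.disjoint_sdiff) hT
      (Finset.disjoint_left.2 fun x h h' => by rw [Finset.mem_Icc] at h h'; omega)
    have hIcc : Icc 1 (r - 20) ∪ Icc (r - 19) r = Icc 1 r := by
      ext x
      simp only [Finset.mem_union, Finset.mem_Icc]
      omega
    rwa [hIcc] at h

theorem stmt9 (k : ℕ) (hk : 2 ≤ k) (hkeven : Even k) (r : ℤ) (hr : 10 * (k : ℤ) ≤ r) :
    ∃ f : Fin k → Finset ℤ, (∀ i, MSTD (f i)) ∧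
      (∀ i j, i ≠ j → Disjoint (f i) (f j)) ∧
      Finset.univ.biUnion f = Finset.Icc 1 r := by
  obtain ⟨m, rfl⟩ : ∃ m, k = 2 * m + 2 := by
    obtain ⟨l, rfl⟩ := hkeven
    exact ⟨l - 1, by omega⟩
  exact exists_partition m r (by push_cast at hr; linarith)
end

section
/- For every integer m ≥ 1, each of the following three sets of integers is MSTD: A = {1,2,3,5} ∪ {6+4i : 0 ≤ i ≤ m} ∪ {9+4m, 10+4m, 11+4m, 13+4m}; B = {1,2,3,5} ∪ {6+4i : 0 ≤ i ≤ m} ∪ {9+4m, 10+4m, 11+4m, 13+4m, 14+4m}; C = {1,2,3,5} ∪ {6+4i : 0 ≤ i ≤ m} ∪ {9+4m, 10+4m, 11+4m}. -/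
/-!
Each of the three sets consists of the progression `2, 6, …, 10 + 4m` (continued to `14 + 4m` for
`B`), together with the odd numbers `1, 3, 5` near the bottom and `9 + 4m, 11 + 4m` (and `13 + 4m`
for `A` and `B`) near the top.

A difference congruent to `2` modulo `4` must come from two odd elements, which lie either in the
same cluster or in opposite clusters. Hence none of `±6, ±10, …, ±(4m + 2)` is a difference, and
`|A - A| ≤ 2M + 1 - 2m`, where `M` is the diameter.

Sums in the other residue classes are filled out by the progression plus itself or plus an odd
element, or by two elements of the top cluster; only `8m + 25` is missed, for `A`. In the class of
`2` modulo `4`, the sums bottom + bottom, bottom + top and top + top leave only two gaps, with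
about `2m` elements altogether. Because the sums of the clusters cover this
class slightly better than the differences do, the sumset has the larger cardinality: the
comparison is `6m + 25 < 6m + 26` for `A`, `6m + 27 < 6m + 29` for `B` and `6m + 21 < 6m + 22`
for `C`. The lemma `mstd_of_gaps` does this counting.
-/

open Finset Pointwise

/-- The arithmetic progression `a, a + 4, …, a + 4 (n - 1)` with `n` terms (empty if `n ≤ 0`). -/
noncomputable def prog (a n : ℤ) : Finset ℤ := (Finset.Icc 0 (n - 1)).image (fun i => a + 4 * i)

lemma mem_prog {a n x : ℤ} :
    x ∈ prog a n ↔ (x - a) % 4 = 0 ∧ a ≤ x ∧ x ≤ a + 4 * (n - 1) := by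
  simp only [prog, Finset.mem_image, Finset.mem_Icc]
  constructor
  · rintro ⟨i, hi, rfl⟩
    omega
  · intro h
    exact ⟨(x - a) / 4, by omega, by omega⟩

lemma card_prog {a n : ℤ} (hn : 0 ≤ n) : ((prog a n).card : ℤ) = n := by
  rw [prog, Finset.card_image_of_injective _ (fun i j h => by simpa using h), Int.card_Icc]
  omega

/-- The counting criterion: if the sums fill `[2, N]` outside a set `E` of at most `e` elements,
while the differences lie in `[-M, M]` and miss `6, 10, …, 4m + 2` (hence also the negatives of
these), then `A` is MSTD as soon as `2M + 1 - 2m < N - 1 - e`. -/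
lemma mstd_of_gaps {A E : Finset ℤ} {m M N e : ℤ} (hm : 1 ≤ m) (hM : 4 * m + 2 ≤ M)
    (hE : (E.card : ℤ) ≤ e)
    (hS : ∀ x, 2 ≤ x → x ≤ N → x ∉ E → ∃ a ∈ A, ∃ b ∈ A, a + b = x)
    (hD : ∀ a ∈ A, ∀ b ∈ A, a - b ≤ M ∧ a - b ∉ prog 6 m)
    (hcount : 2 * M + 1 - 2 * m < N - 1 - e) : MSTD A := by
  have hsum : Finset.Icc 2 N ⊆ (A + A) ∪ E := by
    intro x hx
    rw [Finset.mem_Icc] at hx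
    rw [Finset.mem_union, Finset.mem_add]
    by_cases h : x ∈ E
    · exact Or.inr h
    · exact Or.inl (hS x hx.1 hx.2 h)
  have hsum_card := (Finset.card_le_card hsum).trans (Finset.card_union_le _ _)
  rw [Int.card_Icc] at hsum_card
  have hdisj : Disjoint (prog 6 m) (prog (-(4 * m + 2)) m) := by
    rw [Finset.disjoint_left]
    intro x hx hx'
    rw [mem_prog] at hx hx'
    omega
  have hdisj' : Disjoint (A - A) (prog 6 m ∪ prog (-(4 * m + 2)) m) := by
    rw [Finset.disjoint_left]
    intro x hx hx'
    obtain ⟨a, ha, b, hb, rfl⟩ := Finset.mem_sub.1 hx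
    have h₁ := (hD a ha b hb).2
    have h₂ := (hD b hb a ha).2
    rw [Finset.mem_union] at hx'
    rw [mem_prog] at h₁ h₂
    rw [mem_prog, mem_prog] at hx'
    omega
  have hdiff : (A - A) ∪ (prog 6 m ∪ prog (-(4 * m + 2)) m) ⊆ Finset.Icc (-M) M := by
    intro x hx
    rw [Finset.mem_Icc]
    rcases Finset.mem_union.1 hx with hx | hx
    · obtain ⟨a, ha, b, hb, rfl⟩ := Finset.mem_sub.1 hx
      have h₁ := (hD a ha b hb).1
      have h₂ := (hD b hb a ha).1
      omega
    · rw [Finset.mem_union, mem_prog, mem_prog] at hx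
      omega
  have hdiff_card := Finset.card_le_card hdiff
  rw [Finset.card_union_of_disjoint hdisj', Finset.card_union_of_disjoint hdisj,
    Int.card_Icc] at hdiff_card
  have h₁ := card_prog (a := 6) (n := m) (by omega)
  have h₂ := card_prog (a := -(4 * m + 2)) (n := m) (by omega)
  unfold MSTD
  omega

/-- The progression `6, 10, …, 6 + 4m` in divisibility form. -/
lemma mem_middle {m x : ℤ} : x ∈ (Finset.Icc 0 m).image (fun i => 6 + 4 * i) ↔
    (x - 6) % 4 = 0 ∧ 6 ≤ x ∧ x ≤ 6 + 4 * m := by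
  have h := mem_prog (a := 6) (n := m + 1) (x := x)
  simpa [prog] using h

lemma mstd_A {m : ℤ} (hm : 1 ≤ m) :
    MSTD (({1, 2, 3, 5} : Finset ℤ) ∪ (Finset.Icc 0 m).image (fun i => 6 + 4 * i)
        ∪ {9 + 4 * m, 10 + 4 * m, 11 + 4 * m, 13 + 4 * m}) := by
  set S := ({1, 2, 3, 5} : Finset ℤ) ∪ (Finset.Icc 0 m).image (fun i => 6 + 4 * i)
        ∪ {9 + 4 * m, 10 + 4 * m, 11 + 4 * m, 13 + 4 * m} with hS
  have hmem : ∀ x, x ∈ S ↔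
      (x = 1 ∨ x = 3 ∨ x = 5 ∨ ((x - 2) % 4 = 0 ∧ 2 ≤ x ∧ x ≤ 10 + 4 * m) ∨
        x = 9 + 4 * m ∨ x = 11 + 4 * m ∨ x = 13 + 4 * m) := by
    intro x
    simp only [hS, Finset.mem_union, mem_middle, Finset.mem_insert, Finset.mem_singleton]
    omega
  clear_value S
  refine mstd_of_gaps (E := prog 14 (m - 1) ∪ prog (22 + 4 * m) (m - 1) ∪ {25 + 8 * m})
    (M := 12 + 4 * m) (N := 26 + 8 * m) (e := 2 * m - 1) hm (by omega) ?_ ?_ ?_ (by omega)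
  · have h₀ := Finset.card_union_le (prog 14 (m - 1) ∪ prog (22 + 4 * m) (m - 1)) {25 + 8 * m}
    rw [Finset.card_singleton] at h₀
    have h₁ := Finset.card_union_le (prog 14 (m - 1)) (prog (22 + 4 * m) (m - 1))
    have h₂ := card_prog (a := 14) (n := m - 1) (by omega)
    have h₃ := card_prog (a := 22 + 4 * m) (n := m - 1) (by omega)
    omega
  · intro x h2 hN hx
    simp only [Finset.mem_union, Finset.mem_singleton, mem_prog] at hx
    -- It suffices to name one summand `a` in `S` with `x - a` in `S`.
    suffices h : ∃ a ∈ S, x - a ∈ S by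
      obtain ⟨a, ha, hb⟩ := h
      exact ⟨a, ha, x - a, hb, by omega⟩
    simp only [hmem]
    have hcases :
        (x % 4 = 3 ∧ x ≤ 11 + 4 * m) ∨
        (x % 4 = 1 ∧ x ≤ 13 + 4 * m) ∨
        (x % 4 = 3 ∧ 11 + 4 * m ≤ x ∧ x ≤ 19 + 8 * m) ∨
        (x % 4 = 1 ∧ 13 + 4 * m ≤ x ∧ x ≤ 21 + 8 * m) ∨
        (x % 4 = 0 ∧ x ≤ 12 + 4 * m) ∨
        (x % 4 = 0 ∧ 12 + 4 * m ≤ x ∧ x ≤ 20 + 8 * m) ∨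
        (x = 2) ∨
        (x = 6) ∨
        (x = 10) ∨
        (x = 10 + 4 * m) ∨
        (x = 14 + 4 * m) ∨
        (x = 18 + 8 * m) ∨
        (x = 22 + 8 * m) ∨
        (x = 18 + 4 * m) ∨
        (x = 23 + 8 * m) ∨
        (x = 24 + 8 * m) ∨
        (x = 26 + 8 * m) := by
      omega
    rcases hcases with h | h | h | h | h | h | h | h | h | h | h | h | h | h | h | h | h
    · exact ⟨1, by omega, by omega⟩
    · exact ⟨3, by omega, by omega⟩
    · exact ⟨9 + 4 * m, by omega, by omega⟩
    · exact ⟨11 + 4 * m, by omega, by omega⟩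
    · exact ⟨2, by omega, by omega⟩
    · exact ⟨10 + 4 * m, by omega, by omega⟩
    · exact ⟨1, by omega, by omega⟩
    · exact ⟨3, by omega, by omega⟩
    · exact ⟨5, by omega, by omega⟩
    · exact ⟨1, by omega, by omega⟩
    · exact ⟨3, by omega, by omega⟩
    · exact ⟨9 + 4 * m, by omega, by omega⟩
    · exact ⟨11 + 4 * m, by omega, by omega⟩
    · exact ⟨5, by omega, by omega⟩
    · exact ⟨13 + 4 * m, by omega, by omega⟩
    · exact ⟨11 + 4 * m, by omega, by omega⟩
    · exact ⟨13 + 4 * m, by omega, by omega⟩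
  · intro a ha b hb
    rw [hmem] at ha hb
    rw [mem_prog]
    constructor
    · omega
    · rcases ha with ha | ha | ha | ha | ha <;> omega

lemma mstd_B {m : ℤ} (hm : 1 ≤ m) :
    MSTD (({1, 2, 3, 5} : Finset ℤ) ∪ (Finset.Icc 0 m).image (fun i => 6 + 4 * i)
        ∪ {9 + 4 * m, 10 + 4 * m, 11 + 4 * m, 13 + 4 * m, 14 + 4 * m}) := by
  set S := ({1, 2, 3, 5} : Finset ℤ) ∪ (Finset.Icc 0 m).image (fun i => 6 + 4 * i)
        ∪ {9 + 4 * m, 10 + 4 * m, 11 + 4 * m, 13 + 4 * m, 14 + 4 * m} with hS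
  have hmem : ∀ x, x ∈ S ↔
      (x = 1 ∨ x = 3 ∨ x = 5 ∨ ((x - 2) % 4 = 0 ∧ 2 ≤ x ∧ x ≤ 14 + 4 * m) ∨
        x = 9 + 4 * m ∨ x = 11 + 4 * m ∨ x = 13 + 4 * m) := by
    intro x
    simp only [hS, Finset.mem_union, mem_middle, Finset.mem_insert, Finset.mem_singleton]
    omega
  clear_value S
  refine mstd_of_gaps (E := prog 14 (m - 1) ∪ prog (22 + 4 * m) (m - 1))
    (M := 13 + 4 * m) (N := 28 + 8 * m) (e := 2 * m - 2) hm (by omega) ?_ ?_ ?_ (by omega)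
  · have h₁ := Finset.card_union_le (prog 14 (m - 1)) (prog (22 + 4 * m) (m - 1))
    have h₂ := card_prog (a := 14) (n := m - 1) (by omega)
    have h₃ := card_prog (a := 22 + 4 * m) (n := m - 1) (by omega)
    omega
  · intro x h2 hN hx
    simp only [Finset.mem_union, mem_prog] at hx
    -- It suffices to name one summand `a` in `S` with `x - a` in `S`.
    suffices h : ∃ a ∈ S, x - a ∈ S by
      obtain ⟨a, ha, hb⟩ := h
      exact ⟨a, ha, x - a, hb, by omega⟩
    simp only [hmem]
    have hcases :
        (x % 4 = 3 ∧ x ≤ 11 + 4 * m) ∨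
        (x % 4 = 1 ∧ x ≤ 13 + 4 * m) ∨
        (x % 4 = 3 ∧ 11 + 4 * m ≤ x ∧ x ≤ 19 + 8 * m) ∨
        (x % 4 = 1 ∧ 13 + 4 * m ≤ x ∧ x ≤ 21 + 8 * m) ∨
        (x % 4 = 0 ∧ x ≤ 12 + 4 * m) ∨
        (x % 4 = 0 ∧ 12 + 4 * m ≤ x ∧ x ≤ 20 + 8 * m) ∨
        (x = 2) ∨
        (x = 6) ∨
        (x = 10) ∨
        (x = 10 + 4 * m) ∨
        (x = 14 + 4 * m) ∨
        (x = 18 + 8 * m) ∨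
        (x = 22 + 8 * m) ∨
        (x = 18 + 4 * m) ∨
        (x = 23 + 8 * m) ∨
        (x = 24 + 8 * m) ∨
        (x = 26 + 8 * m) ∨
        (x = 25 + 8 * m) ∨
        (x = 27 + 8 * m) ∨
        (x = 28 + 8 * m) := by
      omega
    rcases hcases with h | h | h | h | h | h | h | h | h | h | h | h | h | h | h | h | h | h | h | h
    · exact ⟨1, by omega, by omega⟩
    · exact ⟨3, by omega, by omega⟩
    · exact ⟨9 + 4 * m, by omega, by omega⟩
    · exact ⟨11 + 4 * m, by omega, by omega⟩
    · exact ⟨2, by omega, by omega⟩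
    · exact ⟨10 + 4 * m, by omega, by omega⟩
    · exact ⟨1, by omega, by omega⟩
    · exact ⟨3, by omega, by omega⟩
    · exact ⟨5, by omega, by omega⟩
    · exact ⟨1, by omega, by omega⟩
    · exact ⟨3, by omega, by omega⟩
    · exact ⟨9 + 4 * m, by omega, by omega⟩
    · exact ⟨11 + 4 * m, by omega, by omega⟩
    · exact ⟨5, by omega, by omega⟩
    · exact ⟨13 + 4 * m, by omega, by omega⟩
    · exact ⟨11 + 4 * m, by omega, by omega⟩
    · exact ⟨13 + 4 * m, by omega, by omega⟩
    · exact ⟨14 + 4 * m, by omega, by omega⟩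
    · exact ⟨14 + 4 * m, by omega, by omega⟩
    · exact ⟨14 + 4 * m, by omega, by omega⟩
  · intro a ha b hb
    rw [hmem] at ha hb
    rw [mem_prog]
    constructor
    · omega
    · rcases ha with ha | ha | ha | ha | ha <;> omega

lemma mstd_C {m : ℤ} (hm : 1 ≤ m) :
    MSTD (({1, 2, 3, 5} : Finset ℤ) ∪ (Finset.Icc 0 m).image (fun i => 6 + 4 * i)
        ∪ {9 + 4 * m, 10 + 4 * m, 11 + 4 * m}) := by
  set S := ({1, 2, 3, 5} : Finset ℤ) ∪ (Finset.Icc 0 m).image (fun i => 6 + 4 * i)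
        ∪ {9 + 4 * m, 10 + 4 * m, 11 + 4 * m} with hS
  have hmem : ∀ x, x ∈ S ↔
      (x = 1 ∨ x = 3 ∨ x = 5 ∨ ((x - 2) % 4 = 0 ∧ 2 ≤ x ∧ x ≤ 10 + 4 * m) ∨
        x = 9 + 4 * m ∨ x = 11 + 4 * m) := by
    intro x
    simp only [hS, Finset.mem_union, mem_middle, Finset.mem_insert, Finset.mem_singleton]
    omega
  clear_value S
  refine mstd_of_gaps (E := prog 14 (m - 1) ∪ prog (18 + 4 * m) m)
    (M := 10 + 4 * m) (N := 22 + 8 * m) (e := 2 * m - 1) hm (by omega) ?_ ?_ ?_ (by omega)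
  · have h₁ := Finset.card_union_le (prog 14 (m - 1)) (prog (18 + 4 * m) (m))
    have h₂ := card_prog (a := 14) (n := m - 1) (by omega)
    have h₃ := card_prog (a := 18 + 4 * m) (n := m) (by omega)
    omega
  · intro x h2 hN hx
    simp only [Finset.mem_union, mem_prog] at hx
    -- It suffices to name one summand `a` in `S` with `x - a` in `S`.
    suffices h : ∃ a ∈ S, x - a ∈ S by
      obtain ⟨a, ha, hb⟩ := h
      exact ⟨a, ha, x - a, hb, by omega⟩
    simp only [hmem]
    have hcases :
        (x % 4 = 3 ∧ x ≤ 11 + 4 * m) ∨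
        (x % 4 = 1 ∧ x ≤ 13 + 4 * m) ∨
        (x % 4 = 3 ∧ 11 + 4 * m ≤ x ∧ x ≤ 19 + 8 * m) ∨
        (x % 4 = 1 ∧ 13 + 4 * m ≤ x ∧ x ≤ 21 + 8 * m) ∨
        (x % 4 = 0 ∧ x ≤ 12 + 4 * m) ∨
        (x % 4 = 0 ∧ 12 + 4 * m ≤ x ∧ x ≤ 20 + 8 * m) ∨
        (x = 2) ∨
        (x = 6) ∨
        (x = 10) ∨
        (x = 10 + 4 * m) ∨
        (x = 14 + 4 * m) ∨
        (x = 18 + 8 * m) ∨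
        (x = 22 + 8 * m) := by
      omega
    rcases hcases with h | h | h | h | h | h | h | h | h | h | h | h | h
    · exact ⟨1, by omega, by omega⟩
    · exact ⟨3, by omega, by omega⟩
    · exact ⟨9 + 4 * m, by omega, by omega⟩
    · exact ⟨11 + 4 * m, by omega, by omega⟩
    · exact ⟨2, by omega, by omega⟩
    · exact ⟨10 + 4 * m, by omega, by omega⟩
    · exact ⟨1, by omega, by omega⟩
    · exact ⟨3, by omega, by omega⟩
    · exact ⟨5, by omega, by omega⟩
    · exact ⟨1, by omega, by omega⟩
    · exact ⟨3, by omega, by omega⟩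
    · exact ⟨9 + 4 * m, by omega, by omega⟩
    · exact ⟨11 + 4 * m, by omega, by omega⟩
  · intro a ha b hb
    rw [hmem] at ha hb
    rw [mem_prog]
    constructor
    · omega
    · rcases ha with ha | ha | ha | ha | ha <;> omega

theorem stmt13 (m : ℤ) (hm : 1 ≤ m) :
    MSTD (({1, 2, 3, 5} : Finset ℤ) ∪ (Finset.Icc 0 m).image (fun i => 6 + 4 * i)
        ∪ {9 + 4 * m, 10 + 4 * m, 11 + 4 * m, 13 + 4 * m}) ∧
    MSTD (({1, 2, 3, 5} : Finset ℤ) ∪ (Finset.Icc 0 m).image (fun i => 6 + 4 * i)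
        ∪ {9 + 4 * m, 10 + 4 * m, 11 + 4 * m, 13 + 4 * m, 14 + 4 * m}) ∧
    MSTD (({1, 2, 3, 5} : Finset ℤ) ∪ (Finset.Icc 0 m).image (fun i => 6 + 4 * i)
        ∪ {9 + 4 * m, 10 + 4 * m, 11 + 4 * m}) :=
  ⟨mstd_A hm, mstd_B hm, mstd_C hm⟩
end

section
/- For every integer m ≥ 1, let S = {0,1,2,4} ∪ {5+4i : 0 ≤ i ≤ m} ∪ {8+4m, 9+4m, 10+4m, 12+4m}. Then for every integer ℓ with 0 ≤ ℓ ≤ m−1, the number 6+4ℓ does not belong to S − S; that is, (S−S) ∩ {6+4ℓ : 0 ≤ ℓ ≤ m−1} = ∅. -/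
open Finset Pointwise

/-! A difference `6 + 4ℓ` is `2` modulo `4`. No element of `S` is `3` modulo `4`, so such a
difference needs one element from `{2, 10 + 4m}` (the elements that are `2` modulo `4`) and one
from `{0, 4, 8 + 4m, 12 + 4m}` (the multiples of `4`). The positive differences of this kind are
at most `2` or at least `6 + 4m`, so all of them lie outside the range `6, …, 4m + 2`. -/

theorem stmt14 (m : ℤ) (hm : 1 ≤ m) (S : Finset ℤ)
    (hS : S = ({0, 1, 2, 4} : Finset ℤ) ∪ (Finset.Icc 0 m).image (fun i => 5 + 4 * i)
        ∪ {8 + 4 * m, 9 + 4 * m, 10 + 4 * m, 12 + 4 * m}) :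
    ∀ ℓ : ℤ, 0 ≤ ℓ → ℓ ≤ m - 1 → 6 + 4 * ℓ ∉ S - S := by
  intro ℓ h0 h1 h
  -- The middle progression only matters through its elements being `1` modulo `4`.
  have key : ∀ x ∈ S, x % 4 = 1 ∨ x = 0 ∨ x = 2 ∨ x = 4 ∨
      x = 8 + 4 * m ∨ x = 10 + 4 * m ∨ x = 12 + 4 * m := by
    intro x hx
    simp only [hS, mem_union, mem_insert, mem_singleton, mem_image, mem_Icc] at hx
    rcases hx with (hx | ⟨i, _, hx⟩) | hx <;> omega
  obtain ⟨a, ha, b, hb, hab⟩ := Finset.mem_sub.mp h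
  rcases key a ha with h | h | h | h | h | h | h <;>
    rcases key b hb with h' | h' | h' | h' | h' | h' | h' <;> omega
end

section
/- Let L = {1,3,4,8,9,10,11}, and for an integer r let R_r = {r−10, r−9, r−8, r−7, r−5, r−2, r−1, r} and K_r = {ℓ ∈ ℤ : 12 ≤ ℓ ≤ r−11 and ℓ is even} ∪ {r−11}. There exists a positive integer N such that for every integer r ≥ N and every subset T of [12, r−11] \ K_r, the set L ∪ K_r ∪ T ∪ R_r is MSTD. -/
/-!
Write `A` for the set in question, so that `A ⊆ [1, r]`. The fringes are rigid:
below `12` the set is `L`, above `r - 11` it is `R`, whatever `T` is.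

* `A - A` lies in `[1 - r, r - 1]`, and it misses `±(r - 7)`: a difference `r - 7` needs its smaller
  term in `{1, 3, 4}`, hence its larger term in `{r - 6, r - 4, r - 3}`, which is disjoint from `R`.
  So `|A - A| ≤ 2r - 3`.
* `A + A` contains all of `[2, 2r]` except possibly `3`. Sums near the two ends come from
  `L + L` and `R + R`; in the middle, one adds an even element of `K` to one of two consecutive
  elements of a fringe (`10, 11` or `r - 10, r - 9`), chosen by parity.
  So `|A + A| ≥ 2r - 2`.
-/

open Finset Pointwise

/-- The elements of `L`, the even part of `K`, and `R` (written as `r - x`) already produce every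
integer of `[2, 2r]` other than `3` as a sum, independently of `T`. -/
lemma exists_add_eq (r s : ℤ) (A : Finset ℤ)
    (hl : ∀ x ∈ ({1, 3, 4, 8, 9, 10, 11} : Finset ℤ), x ∈ A)
    (hk : ∀ x, 12 ≤ x → x ≤ r - 11 → x % 2 = 0 → x ∈ A)
    (hR : ∀ x ∈ ({0, 1, 2, 5, 7, 8, 9, 10} : Finset ℤ), r - x ∈ A)
    (h2 : 2 ≤ s) (h3 : s ≠ 3) (hs : s ≤ 2 * r) :
    ∃ a ∈ A, ∃ b ∈ A, a + b = s := by
  have low : ∀ s ∈ Finset.Icc (2 : ℤ) 21, s ≠ 3 →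
      ∃ a ∈ ({1, 3, 4, 8, 9, 10, 11} : Finset ℤ),
        ∃ b ∈ ({1, 3, 4, 8, 9, 10, 11} : Finset ℤ), a + b = s := by decide
  have high : ∀ t ∈ Finset.Icc (0 : ℤ) 20,
      ∃ a ∈ ({0, 1, 2, 5, 7, 8, 9, 10} : Finset ℤ),
        ∃ b ∈ ({0, 1, 2, 5, 7, 8, 9, 10} : Finset ℤ), a + b = t := by decide
  by_cases c1 : s ≤ 21
  · obtain ⟨a, ha, b, hb, hab⟩ := low s (Finset.mem_Icc.2 ⟨h2, c1⟩) h3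
    exact ⟨a, hl a ha, b, hl b hb, hab⟩
  by_cases c2 : 2 * r - 20 ≤ s
  · obtain ⟨a, ha, b, hb, hab⟩ := high (2 * r - s) (Finset.mem_Icc.2 ⟨by omega, by omega⟩)
    exact ⟨r - a, hR a ha, r - b, hR b hb, by omega⟩
  by_cases c3 : s ≤ r - 1
  · rcases Int.emod_two_eq_zero_or_one s with h | h
    · exact ⟨10, hl 10 (by decide), s - 10, hk _ (by omega) (by omega) (by omega), by ring⟩
    · exact ⟨11, hl 11 (by decide), s - 11, hk _ (by omega) (by omega) (by omega), by ring⟩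
  -- The middle ranges of sums leave a gap at `r` and `r + 1`, filled using the element `1`.
  by_cases c4 : s = r
  · exact ⟨1, hl 1 (by decide), r - 1, hR 1 (by decide), by omega⟩
  by_cases c5 : s = r + 1
  · exact ⟨1, hl 1 (by decide), r - 0, hR 0 (by decide), by omega⟩
  rcases Int.emod_two_eq_zero_or_one (s - r) with h | h
  · exact ⟨r - 10, hR 10 (by decide), s - (r - 10),
      hk _ (by omega) (by omega) (by omega), by ring⟩
  · exact ⟨r - 9, hR 9 (by decide), s - (r - 9),
      hk _ (by omega) (by omega) (by omega), by ring⟩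

theorem stmt15 (L : Finset ℤ) (hL : L = ({1, 3, 4, 8, 9, 10, 11} : Finset ℤ)) :
    ∃ N : ℕ, 0 < N ∧ ∀ r : ℤ, (N : ℤ) ≤ r →
      ∀ K R : Finset ℤ,
        K = (Finset.Icc 12 (r - 11)).filter (fun ℓ => Even ℓ) ∪ {r - 11} →
        R = ({r - 10, r - 9, r - 8, r - 7, r - 5, r - 2, r - 1, r} : Finset ℤ) →
        ∀ T ⊆ Finset.Icc 12 (r - 11) \ K,
          MSTD (L ∪ K ∪ T ∪ R) := by
  refine ⟨100, by norm_num, ?_⟩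
  intro r hr K R hK hR T hT
  have hr : 100 ≤ r := by exact_mod_cast hr
  have hKb : ∀ x ∈ K, 12 ≤ x ∧ x ≤ r - 11 := by
    intro x hx
    simp only [hK, mem_union, mem_filter, mem_Icc, mem_singleton] at hx
    omega
  have hTb : ∀ x ∈ T, 12 ≤ x ∧ x ≤ r - 11 := fun x hx =>
    mem_Icc.1 (mem_sdiff.1 (hT hx)).1
  set A := L ∪ K ∪ T ∪ R with hA
  -- All that the difference count needs: the fringes of `A`, with nothing said about the middle.
  have hbd : ∀ x ∈ A, (x = 1 ∨ x = 3 ∨ x = 4 ∨ 8 ≤ x) ∧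
      (x ≤ r - 7 ∨ x = r - 5 ∨ x = r - 2 ∨ x = r - 1 ∨ x = r) := by
    intro x hx
    simp only [hA, mem_union] at hx
    rcases hx with ((hx | hx) | hx) | hx
    · simp only [hL, mem_insert, mem_singleton] at hx
      omega
    · have := hKb x hx
      omega
    · have := hTb x hx
      omega
    · simp only [hR, mem_insert, mem_singleton] at hx
      omega
  have hdiff : A - A ⊆ ((Icc (1 - r) (r - 1)).erase (r - 7)).erase (7 - r) := by
    intro d hd
    obtain ⟨a, ha, b, hb, rfl⟩ := mem_sub.1 hd
    have h1 := hbd a ha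
    have h2 := hbd b hb
    simp only [mem_erase, mem_Icc]
    omega
  have hsum : (Icc 2 (2 * r)).erase 3 ⊆ A + A := by
    intro s hs
    simp only [mem_erase, mem_Icc] at hs
    refine mem_add.2 (exists_add_eq r s A ?_ ?_ ?_ hs.2.1 hs.1 hs.2.2)
    · intro x hx
      simp only [hA, mem_union]
      exact Or.inl (Or.inl (Or.inl (hL ▸ hx)))
    · intro x h1 h2 h3
      have : x ∈ K := by
        simp only [hK, mem_union, mem_filter, mem_Icc]
        exact Or.inl ⟨⟨h1, h2⟩, Int.even_iff.2 h3⟩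
      simp only [hA, mem_union]
      exact Or.inl (Or.inl (Or.inr this))
    · intro x hx
      have : r - x ∈ R := by
        simp only [mem_insert, mem_singleton] at hx
        simp only [hR, mem_insert, mem_singleton]
        omega
      simp only [hA, mem_union]
      exact Or.inr this
  have hc1 := card_le_card hdiff
  have hc2 := card_le_card hsum
  rw [card_erase_of_mem (by simp only [mem_erase, mem_Icc]; omega),
    card_erase_of_mem (by simp only [mem_Icc]; omega), Int.card_Icc] at hc1
  rw [card_erase_of_mem (by simp only [mem_Icc]; omega), Int.card_Icc] at hc2
  unfold MSTD
  omega
end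

section
/- Fix an integer ℓ ≥ 1 and subsets L ⊆ [0, ℓ−1] and R_0 ⊆ [0, ℓ−1]. For every ε > 0 there exists r_0 such that for all integers r ≥ r_0 the following holds: writing R = {(r−ℓ) + x : x ∈ R_0}, the number of subsets M of [ℓ, r−ℓ−1] for which the set S = L ∪ M ∪ R satisfies [2ℓ−1, 2r−2ℓ−1] ⊆ S + S is at least (1 − 6(2^{−|L|} + 2^{−|R_0|}) − ε) · 2^{r−2ℓ}. -/
/-!
The proof is a union bound over the target sums `k`. Put `I = [l, r-l-1]`.

For `k = 2l-1+n` with `0 ≤ n ≤ r-3l`, a set `M ⊆ I` with `k ∉ S+S` must avoid the `|L|` points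
`k - a` (`a ∈ L`), all lying in `I` just above the block `[l, l+n-1]`, and must contain no pair
`x, k-x` inside that block of length `n`. These conditions concern disjoint parts of `I`, so the
proportion of such `M` is at most `2^{-|L|} w(n)`, where `w(n)` (`pairFreeDensity`) is the proportion
of subsets of a block of length `n` that contain no pair summing to the sum of its endpoints:
`w(0) = 1`, `w(1) = 1/2`, `w(n+2) = (3/4) w(n)`. Since `∑ w(n) = 4 + 2 = 6`, these `k` contribute at
most `6 · 2^{-|L|}`; reflecting, the sums `k = 2r-2l-1-n` contribute at most `6 · 2^{-|R₀|}`.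
There remain the `2l-1` sums `k ∈ [r-l, r+l-2]`. For each of them the pairs lying in a block of
length at least `r-3l+1` already give probability `w(length)`, which tends to `0` as `r → ∞`.
-/

open Finset Pointwise

/-- The number of subsets of a block of `n` consecutive integers containing no two (possibly equal)
elements whose sum is the sum of the endpoints of the block. -/
def pairFreeCount : ℕ → ℕ
  | 0 => 1
  | 1 => 1
  | n + 2 => 3 * pairFreeCount n

/-- The proportion of the subsets of a block of length `n` counted by `pairFreeCount`. -/
noncomputable def pairFreeDensity (n : ℕ) : ℝ := (pairFreeCount n : ℝ) / 2 ^ n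

lemma pairFreeDensity_nonneg (n : ℕ) : 0 ≤ pairFreeDensity n := by
  unfold pairFreeDensity; positivity

lemma pairFreeDensity_add_two (n : ℕ) :
    pairFreeDensity (n + 2) = 3 / 4 * pairFreeDensity n := by
  simp only [pairFreeDensity, pairFreeCount]
  push_cast
  field_simp
  ring

/-- The closed form exhibits `4 w(n) + 4 w(n+1)` as the tail of the series `∑ w`, whose sum is `6`. -/
lemma sum_pairFreeDensity (n : ℕ) :
    ∑ i ∈ range n, pairFreeDensity i
      = 6 - 4 * pairFreeDensity n - 4 * pairFreeDensity (n + 1) := by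
  induction n with
  | zero => norm_num [pairFreeDensity, pairFreeCount]
  | succ n ih =>
    rw [sum_range_succ, ih, pairFreeDensity_add_two]
    ring

lemma sum_pairFreeDensity_le (n : ℕ) : ∑ i ∈ range n, pairFreeDensity i ≤ 6 := by
  have h1 := pairFreeDensity_nonneg n
  have h2 := pairFreeDensity_nonneg (n + 1)
  rw [sum_pairFreeDensity]
  linarith

lemma tendsto_pairFreeDensity :
    Filter.Tendsto pairFreeDensity Filter.atTop (nhds 0) :=
  (summable_of_sum_range_le pairFreeDensity_nonneg sum_pairFreeDensity_le).tendsto_atTop_zero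

/-- Removing both endpoints of a block costs a factor `3`, since they cannot both be present. -/
lemma card_pairFree_le (n : ℕ) : ∀ a : ℤ,
    #{M ∈ (Ico a (a + n)).powerset | ∀ x ∈ M, 2 * a + n - 1 - x ∉ M} ≤ pairFreeCount n := by
  induction n using Nat.twoStepInduction with
  | zero =>
    intro a
    refine (card_filter_le _ _).trans ?_
    simp [pairFreeCount]
  | one =>
    intro a
    rw [pairFreeCount, card_le_one]
    -- The only admissible subset of the one-point block `{a}` is the empty set.
    have key : ∀ M ∈ ({M ∈ (Ico a (a + (1 : ℕ))).powerset |
        ∀ x ∈ M, 2 * a + (1 : ℕ) - 1 - x ∉ M} : Finset (Finset ℤ)), M = ∅ := by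
      intro M hM
      simp only [mem_filter, mem_powerset] at hM
      rw [eq_empty_iff_forall_notMem]
      intro x hx
      have h1 := mem_Ico.1 (hM.1 hx)
      have h2 := hM.2 x hx
      have : 2 * a + ((1 : ℕ) : ℤ) - 1 - x = x := by push_cast at *; omega
      rw [this] at h2
      exact h2 hx
    intro M hM M' hM'
    rw [key M hM, key M' hM']
  | more n ih _ =>
    intro a
    set A := {M ∈ (Ico (a + 1) (a + 1 + n)).powerset | ∀ x ∈ M, 2 * (a + 1) + n - 1 - x ∉ M}
      with hA
    let B : Finset (Bool × Bool) := {(false, false), (true, false), (false, true)}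
    have hB : #(B ×ˢ A) ≤ pairFreeCount (n + 2) := by
      rw [card_product, pairFreeCount]
      exact Nat.mul_le_mul (by decide) (ih (a + 1))
    refine le_trans ?_ hB
    refine card_le_card_of_injOn
      (fun M => ((decide (a ∈ M), decide (a + n + 1 ∈ M)), M ∩ Ico (a + 1) (a + 1 + n))) ?_ ?_
    · intro M hM
      simp only [coe_filter, Set.mem_ofPred_eq, mem_powerset] at hM
      simp only [coe_product, Set.mem_prod, mem_coe]
      constructor
      · have : a ∈ M → a + n + 1 ∉ M := by
          intro h
          have := hM.2 a h
          convert this using 2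
          push_cast; ring
        by_cases h1 : a ∈ M <;> by_cases h2 : a + n + 1 ∈ M <;> simp_all [B]
      · simp only [hA, mem_filter, mem_powerset]
        refine ⟨inter_subset_right, fun x hx hx' => ?_⟩
        have := hM.2 x (mem_inter.1 hx).1
        apply this
        convert (mem_inter.1 hx').1 using 1
        push_cast; ring
    · intro M hM M' hM' h
      simp only [coe_filter, Set.mem_ofPred_eq, mem_powerset] at hM hM'
      simp only [Prod.mk.injEq, decide_eq_decide] at h
      obtain ⟨⟨h1, h2⟩, h3⟩ := h
      ext x
      by_cases hx : x ∈ Ico (a + 1) (a + 1 + n)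
      · have := Finset.ext_iff.1 h3 x
        simpa [mem_inter, hx] using this
      · by_cases hxa : x = a
        · rw [hxa, h1]
        · by_cases hxb : x = a + n + 1
          · rw [hxb, h2]
          · have hxn : x ∉ Ico a (a + ((n + 2 : ℕ) : ℤ)) := by
              simp only [mem_Ico] at hx ⊢
              push_cast
              omega
            exact ⟨fun h => absurd (hM.1 h) hxn, fun h => absurd (hM'.1 h) hxn⟩

/-- Avoiding a set `T` and being pair-free on a block disjoint from `T` are independent events for a
uniformly random subset of `I`, of probabilities `2^{-|T|}` and `w(n)`; a property `P` implying both is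
therefore at most as likely as the product. -/
lemma card_bad_le (I T : Finset ℤ) (a : ℤ) (n : ℕ) (hT : T ⊆ I) (hJ : Ico a (a + n) ⊆ I)
    (hTJ : Disjoint T (Ico a (a + n))) (P : Finset ℤ → Prop) [DecidablePred P]
    (hP : ∀ M ⊆ I, P M → (∀ t ∈ T, t ∉ M) ∧ ∀ x ∈ M, 2 * a + n - 1 - x ∉ M) :
    (#{M ∈ I.powerset | P M} : ℝ) ≤ 2 ^ #I * ((2 : ℝ) ^ (-(#T : ℤ)) * pairFreeDensity n) := by
  set J := Ico a (a + n) with hJdef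
  have hJc : #J = n := by simp [hJdef]
  set A := {M ∈ J.powerset | ∀ x ∈ M, 2 * a + n - 1 - x ∉ M} with hA
  have hcard : #(I \ (T ∪ J)) + (#T + n) = #I := by
    have := card_sdiff_add_card_eq_card (union_subset hT hJ)
    rwa [card_union_of_disjoint hTJ, hJc] at this
  have h1 : #{M ∈ I.powerset | P M} ≤ #(A ×ˢ (I \ (T ∪ J)).powerset) := by
    refine card_le_card_of_injOn (fun M => (M ∩ J, M \ (T ∪ J))) ?_ ?_
    · intro M hM
      simp only [coe_filter, Set.mem_ofPred_eq, mem_powerset] at hM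
      obtain ⟨_, h2⟩ := hP M hM.1 hM.2
      simp only [coe_product, Set.mem_prod, mem_coe, mem_powerset, hA, mem_filter]
      exact ⟨⟨inter_subset_right, fun x hx hx' => h2 x (mem_inter.1 hx).1 (mem_inter.1 hx').1⟩,
        sdiff_subset_sdiff hM.1 le_rfl⟩
    · intro M hM M' hM' h
      simp only [coe_filter, Set.mem_ofPred_eq, mem_powerset] at hM hM'
      obtain ⟨h1, _⟩ := hP M hM.1 hM.2
      obtain ⟨h1', _⟩ := hP M' hM'.1 hM'.2
      simp only [Prod.mk.injEq] at h
      ext x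
      have e1 := Finset.ext_iff.1 h.1 x
      have e2 := Finset.ext_iff.1 h.2 x
      have e3 := h1 x
      have e4 := h1' x
      simp only [mem_inter, mem_sdiff, mem_union] at e1 e2
      tauto
  have h2 : #{M ∈ I.powerset | P M} ≤ pairFreeCount n * 2 ^ #(I \ (T ∪ J)) := by
    rw [card_product, card_powerset] at h1
    exact h1.trans (Nat.mul_le_mul_right _ (card_pairFree_le n a))
  have h3 : (#{M ∈ I.powerset | P M} : ℝ) ≤ pairFreeCount n * 2 ^ #(I \ (T ∪ J)) := by
    exact_mod_cast h2
  refine h3.trans (le_of_eq ?_)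
  rw [← hcard, pairFreeDensity, zpow_neg, zpow_natCast, pow_add, pow_add]
  field_simp

theorem stmt16 (l : ℤ) (hl : 1 ≤ l) (L R₀ : Finset ℤ)
    (hL : L ⊆ Finset.Icc 0 (l - 1)) (hR₀ : R₀ ⊆ Finset.Icc 0 (l - 1))
    (ε : ℝ) (hε : 0 < ε) :
    ∃ r₀ : ℤ, ∀ r : ℤ, r₀ ≤ r →
      (1 - 6 * ((2 : ℝ) ^ (-(L.card : ℤ)) + (2 : ℝ) ^ (-(R₀.card : ℤ))) - ε)
          * (2 : ℝ) ^ (r - 2 * l) ≤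
      (((Finset.Icc l (r - l - 1)).powerset.filter (fun M =>
          Finset.Icc (2 * l - 1) (2 * r - 2 * l - 1) ⊆
            (L ∪ M ∪ R₀.image (fun x => (r - l) + x))
              + (L ∪ M ∪ R₀.image (fun x => (r - l) + x)))).card : ℝ) := by
  have hlR : (0 : ℝ) < 2 * l := by
    have : (0 : ℤ) < 2 * l := by omega
    exact_mod_cast this
  obtain ⟨N₀, hN₀⟩ := Filter.eventually_atTop.1
    (tendsto_pairFreeDensity.eventually_lt_const (div_pos hε hlR))
  refine ⟨3 * l + N₀, fun r hr => ?_⟩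
  obtain ⟨m, hm⟩ : ∃ m : ℕ, r = 3 * l + m := ⟨(r - 3 * l).toNat, by omega⟩
  have hmN : N₀ ≤ m := by omega
  set I := Icc l (r - l - 1) with hI
  set S : Finset ℤ → Finset ℤ := fun M => L ∪ M ∪ R₀.image (fun x => (r - l) + x) with hS
  have hIc : (#I : ℤ) = r - 2 * l := by
    rw [hI, Int.card_Icc]; omega
  have hMS : ∀ M, M ⊆ S M := fun M x hx => by simp [hS, hx]
  have hLS : ∀ M, L ⊆ S M := fun M x hx => by simp [hS, hx]
  have hRS : ∀ M, ∀ x ∈ R₀, (r - l) + x ∈ S M :=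
    fun M x hx => mem_union_right _ (mem_image_of_mem _ hx)
  have hpair : ∀ (M : Finset ℤ) (k x y : ℤ), k ∉ S M + S M → x ∈ S M → y ∈ S M → x + y ≠ k :=
    fun M k x y hk hx hy h => hk (h ▸ add_mem_add hx hy)
  let bad : ℤ → Finset (Finset ℤ) := fun k => {M ∈ I.powerset | k ∉ S M + S M}
  have hleft : ∀ n ∈ range (m + 1), (#(bad (2 * l - 1 + n)) : ℝ)
      ≤ 2 ^ #I * ((2 : ℝ) ^ (-(#L : ℤ)) * pairFreeDensity n) := by
    intro n hn
    rw [mem_range] at hn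
    have hTc : #(L.image (fun x => (2 * l - 1 + n) - x)) = #L :=
      card_image_of_injective _ sub_right_injective
    rw [← hTc]
    refine card_bad_le I _ l n ?_ ?_ ?_ _ ?_
    · intro t ht
      obtain ⟨x, hx, rfl⟩ := mem_image.1 ht
      have := mem_Icc.1 (hL hx)
      rw [hI, mem_Icc]; omega
    · intro t ht
      rw [mem_Ico] at ht
      rw [hI, mem_Icc]; omega
    · rw [disjoint_left]
      intro t ht
      obtain ⟨x, hx, rfl⟩ := mem_image.1 ht
      have := mem_Icc.1 (hL hx)
      rw [mem_Ico]; omega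
    · intro M _ hk
      refine ⟨fun t ht htM => ?_, fun x hx hx' => ?_⟩
      · obtain ⟨x, hx, rfl⟩ := mem_image.1 ht
        exact hpair M _ _ _ hk (hLS M hx) (hMS M htM) (by ring)
      · exact hpair M _ _ _ hk (hMS M hx) (hMS M hx') (by ring)
  have hright : ∀ n ∈ range (m + 1), (#(bad (2 * r - 2 * l - 1 - n)) : ℝ)
      ≤ 2 ^ #I * ((2 : ℝ) ^ (-(#R₀ : ℤ)) * pairFreeDensity n) := by
    intro n hn
    rw [mem_range] at hn
    have hTc : #(R₀.image (fun x => (r - l - 1 - n) - x)) = #R₀ :=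
      card_image_of_injective _ sub_right_injective
    rw [← hTc]
    refine card_bad_le I _ (r - l - n) n ?_ ?_ ?_ _ ?_
    · intro t ht
      obtain ⟨x, hx, rfl⟩ := mem_image.1 ht
      have := mem_Icc.1 (hR₀ hx)
      rw [hI, mem_Icc]; omega
    · intro t ht
      rw [mem_Ico] at ht
      rw [hI, mem_Icc]; omega
    · rw [disjoint_left]
      intro t ht
      obtain ⟨x, hx, rfl⟩ := mem_image.1 ht
      have := mem_Icc.1 (hR₀ hx)
      rw [mem_Ico]; omega
    · intro M _ hk
      refine ⟨fun t ht htM => ?_, fun x hx hx' => ?_⟩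
      · obtain ⟨x, hx, rfl⟩ := mem_image.1 ht
        exact hpair M _ _ _ hk (hRS M x hx) (hMS M htM) (by ring)
      · exact hpair M _ _ _ hk (hMS M hx) (hMS M hx') (by ring)
  have hmid : ∀ k ∈ Icc (r - l) (r + l - 2), (#(bad k) : ℝ) ≤ 2 ^ #I * (ε / (2 * l)) := by
    intro k hk
    rw [mem_Icc] at hk
    -- The block of all `x` with `x` and `k - x` both in `I`.
    obtain ⟨a, n, hmn, hak, ha, han⟩ : ∃ (a : ℤ) (n : ℕ), m ≤ n ∧ 2 * a + n - 1 = k ∧ l ≤ a ∧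
        a + n ≤ r - l := by
      by_cases h : k ≤ r - 1
      · exact ⟨l, (k - 2 * l + 1).toNat, by omega, by omega, by omega, by omega⟩
      · exact ⟨k - (r - l - 1), (2 * (r - l - 1) - k + 1).toNat, by omega, by omega, by omega,
          by omega⟩
    have h1 : (#(bad k) : ℝ) ≤ 2 ^ #I * ((2 : ℝ) ^ (-(#(∅ : Finset ℤ) : ℤ)) * pairFreeDensity n) := by
      refine card_bad_le I ∅ a n (empty_subset _) ?_ (disjoint_empty_left _) _ ?_
      · intro t ht
        rw [mem_Ico] at ht
        rw [hI, mem_Icc]; omega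
      · intro M _ hk'
        refine ⟨by simp, fun x hx hx' => ?_⟩
        exact hpair M _ _ _ hk' (hMS M hx) (hMS M hx') (by rw [← hak]; ring)
    refine h1.trans ?_
    have := (hN₀ n (hmN.trans hmn)).le
    simp only [card_empty, Nat.cast_zero, neg_zero, zpow_zero, one_mul]
    gcongr
  set good := {M ∈ I.powerset | Icc (2 * l - 1) (2 * r - 2 * l - 1) ⊆ S M + S M} with hgood
  set X := (range (m + 1)).biUnion (fun n => bad (2 * l - 1 + n)) with hX
  set Y := (range (m + 1)).biUnion (fun n => bad (2 * r - 2 * l - 1 - n)) with hY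
  set Z := (Icc (r - l) (r + l - 2)).biUnion bad with hZ
  have hcover : I.powerset ⊆ good ∪ (X ∪ (Y ∪ Z)) := by
    intro M hM
    by_cases hg : Icc (2 * l - 1) (2 * r - 2 * l - 1) ⊆ S M + S M
    · exact mem_union_left _ (mem_filter.2 ⟨hM, hg⟩)
    · apply mem_union_right
      obtain ⟨k, hk, hkS⟩ := not_subset.1 hg
      rw [mem_Icc] at hk
      have hb : M ∈ bad k := mem_filter.2 ⟨hM, hkS⟩
      by_cases h1 : k < r - l
      · refine mem_union_left _ (mem_biUnion.2 ⟨(k - (2 * l - 1)).toNat, ?_, ?_⟩)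
        · rw [mem_range]; omega
        · convert hb using 2; omega
      · apply mem_union_right
        by_cases h2 : r + l - 2 < k
        · refine mem_union_left _ (mem_biUnion.2 ⟨(2 * r - 2 * l - 1 - k).toNat, ?_, ?_⟩)
          · rw [mem_range]; omega
          · convert hb using 2; omega
        · exact mem_union_right _ (mem_biUnion.2 ⟨k, mem_Icc.2 (by omega), hb⟩)
  have hcount : (2 : ℝ) ^ #I ≤ #good + (#X + (#Y + #Z)) := by
    have h1 := card_le_card hcover
    rw [card_powerset] at h1
    have h2 := card_union_le good (X ∪ (Y ∪ Z))
    have h3 := card_union_le X (Y ∪ Z)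
    have h4 := card_union_le Y Z
    have h5 : 2 ^ #I ≤ #good + (#X + (#Y + #Z)) := by omega
    exact_mod_cast h5
  -- The union bound over either family of sums near an end of the range.
  have hside : ∀ (f : ℕ → ℤ) (c : ℝ), 0 ≤ c →
      (∀ n ∈ range (m + 1), (#(bad (f n)) : ℝ) ≤ 2 ^ #I * (c * pairFreeDensity n)) →
      (#((range (m + 1)).biUnion (fun n => bad (f n))) : ℝ) ≤ 2 ^ #I * (6 * c) := by
    intro f c hc h
    calc (#((range (m + 1)).biUnion (fun n => bad (f n))) : ℝ)
        ≤ ∑ n ∈ range (m + 1), (#(bad (f n)) : ℝ) := by exact_mod_cast card_biUnion_le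
      _ ≤ ∑ n ∈ range (m + 1), 2 ^ #I * (c * pairFreeDensity n) := sum_le_sum h
      _ = 2 ^ #I * (c * ∑ n ∈ range (m + 1), pairFreeDensity n) := by
        rw [mul_sum, mul_sum]
      _ ≤ 2 ^ #I * (c * 6) := by
        gcongr
        exact sum_pairFreeDensity_le _
      _ = 2 ^ #I * (6 * c) := by ring
  have hXc : (#X : ℝ) ≤ _ := hside _ _ (by positivity) hleft
  have hYc : (#Y : ℝ) ≤ _ := hside _ _ (by positivity) hright
  have hZc : (#Z : ℝ) ≤ 2 ^ #I * ε := by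
    have hc : (#(Icc (r - l) (r + l - 2)) : ℝ) ≤ 2 * l := by
      have : (#(Icc (r - l) (r + l - 2)) : ℤ) ≤ 2 * l := by
        rw [Int.card_Icc]; omega
      exact_mod_cast this
    calc (#Z : ℝ) ≤ ∑ k ∈ Icc (r - l) (r + l - 2), (#(bad k) : ℝ) := by
          exact_mod_cast card_biUnion_le
      _ ≤ ∑ k ∈ Icc (r - l) (r + l - 2), 2 ^ #I * (ε / (2 * l)) := sum_le_sum hmid
      _ = #(Icc (r - l) (r + l - 2)) * (2 ^ #I * (ε / (2 * l))) := by
        rw [sum_const, nsmul_eq_mul]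
      _ ≤ (2 * l) * (2 ^ #I * (ε / (2 * l))) := by gcongr
      _ = 2 ^ #I * ε := by field_simp
  rw [← hIc, zpow_natCast]
  change _ ≤ (#good : ℝ)
  linarith
end

section
/- Fix an integer ℓ ≥ 1 and subsets L ⊆ [0, ℓ−1] and R_0 ⊆ [0, ℓ−1]. Let a be an integer with a ≥ 2 such that [ℓ, 2ℓ−a] ⊆ L + L and [a−2, ℓ−2] ⊆ R_0 + R_0, and set τ(L) = |{i ∈ L : i ≤ ℓ−a+1}| and τ(R_0) = |{i ∈ R_0 : i ≥ a−2}|. For every ε > 0 there exists r_0 such that for all integers r ≥ r_0 the following holds: writing R = {(r−ℓ) + x : x ∈ R_0} (so that [2r−2ℓ+a−2, 2r−ℓ−2] ⊆ R + R), the number of subsets M of [ℓ, r−ℓ−1] for which the set S = L ∪ M ∪ R satisfies [2ℓ−a+1, 2r−2ℓ+a−3] ⊆ S + S is at least (1 − (a−2)(2^{−τ(R_0)} + 2^{−τ(L)}) − 6(2^{−|L|} + 2^{−|R_0|}) − ε) · 2^{r−2ℓ}. -/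
/-!
The complement is bounded by a union bound over the missing sums `k`. For each `k`, the event
`k ∉ S + S` forces `M` to avoid a set `D` of single points (the `k - i` with `i` in the relevant
fringe and `k - i` in the range of `M`) and, for every `m` in a suitable interval `[u, v]` with
`u + v = k` disjoint from `D`, not to contain both `m` and `k - m`. The points of `D` contribute
a factor `2^{-|D|}`, and an interval with `j` elements contributes `pairProb j`, that is
`(3/4)^{j/2}` for even `j` and `(1/2) (3/4)^{(j-1)/2}` for odd `j` (`card_le_of_avoid`).

There are `a - 2` extreme values of `k` on each side; for them only the points of `D` are used,
which gives the terms with `τ`. For the remaining `k` up to `r - l - 1` the whole set `L` is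
available and `j` runs over distinct naturals, so `∑ pairProb j = 6` gives the term
`6 · 2^{-|L|}`; the values from `r + l - 1` on are handled in the same way with `R`. Finally,
the `2l - 1` central values of `k` each have probability at most `pairProb j` with `j → ∞` as
`r → ∞`, and they are absorbed in `ε`.
-/

open Finset Pointwise

/-- The probability that a uniformly random subset of an interval with `j` elements contains no
two (possibly equal) points that are swapped by the reflection of the interval. -/
noncomputable def pairProb : ℕ → ℝ
  | 0 => 1
  | 1 => 1 / 2
  | j + 2 => 3 / 4 * pairProb j

lemma pairProb_nonneg : ∀ j, 0 ≤ pairProb j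
  | 0 => by simp [pairProb]
  | 1 => by simp [pairProb]
  | j + 2 => by
    have := pairProb_nonneg j
    rw [pairProb]; linarith

/-- The tail of the series from `n` on is `4 * (pairProb n + pairProb (n + 1))`. -/
lemma sum_pairProb_add (n : ℕ) :
    ∑ j ∈ range n, pairProb j + 4 * (pairProb n + pairProb (n + 1)) = 6 := by
  induction n with
  | zero => norm_num [pairProb]
  | succ n ih =>
    rw [sum_range_succ, show n + 1 + 1 = n + 2 from rfl, pairProb]
    linarith

lemma sum_range_pairProb_le (n : ℕ) : ∑ j ∈ range n, pairProb j ≤ 6 := by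
  have := sum_pairProb_add n
  have := pairProb_nonneg n
  have := pairProb_nonneg (n + 1)
  linarith

lemma sum_pairProb_le {s : Finset ℤ} {f : ℤ → ℕ} (hf : Set.InjOn f s) :
    ∑ k ∈ s, pairProb (f k) ≤ 6 := by
  rw [← sum_image (f := pairProb) hf]
  refine le_trans (sum_le_sum_of_subset_of_nonneg (t := range ((s.image f).sup id + 1)) ?_ ?_)
    (sum_range_pairProb_le _)
  · intro j hj
    have : id j ≤ (s.image f).sup id := le_sup hj
    simp only [id] at this
    exact mem_range.2 (by simpa using Nat.lt_succ_of_le this)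
  · intro j _ _
    exact pairProb_nonneg j

lemma exists_pairProb_le {δ : ℝ} (hδ : 0 < δ) : ∃ J, ∀ j, J ≤ j → pairProb j ≤ δ := by
  have hs : Summable pairProb := summable_of_sum_range_le pairProb_nonneg sum_range_pairProb_le
  have := hs.tendsto_atTop_zero.eventually (gt_mem_nhds hδ)
  obtain ⟨J, hJ⟩ := Filter.eventually_atTop.1 this
  exact ⟨J, fun j hj => (hJ j hj).le⟩

/-- Peeling off the outermost pair `{u, v}` leaves three possible traces on it, out of four. -/
lemma card_le_of_avoid_pairs : ∀ (j : ℕ) (V : Finset ℤ) (u v : ℤ), v - u + 1 = j →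
    Icc u v ⊆ V → ∀ B : Finset (Finset ℤ),
    (∀ M ∈ B, M ⊆ V ∧ ∀ m ∈ Icc u v, ¬ (m ∈ M ∧ u + v - m ∈ M)) →
    (B.card : ℝ) ≤ 2 ^ V.card * pairProb j
  | 0, V, u, v, _, _, B, hB => by
    have : B.card ≤ V.powerset.card :=
      card_le_card fun M hM => mem_powerset.2 (hB M hM).1
    rw [card_powerset] at this
    rw [pairProb, mul_one]
    exact_mod_cast this
  | 1, V, u, v, hj, hV, B, hB => by
    obtain rfl : v = u := by push_cast at hj; omega
    have hv : v ∈ V := hV (by simp)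
    have : B.card ≤ (V.erase v).powerset.card := by
      refine card_le_card fun M hM => mem_powerset.2 fun x hx => mem_erase.2 ⟨?_, (hB M hM).1 hx⟩
      rintro rfl
      exact (hB M hM).2 x (by simp) ⟨hx, by simpa using hx⟩
    rw [card_powerset] at this
    rw [pairProb, ← card_erase_add_one hv, pow_succ]
    have h2 : (B.card : ℝ) ≤ 2 ^ (V.erase v).card := by exact_mod_cast this
    linarith
  | j + 2, V, u, v, hj, hV, B, hB => by
    have huv : u < v := by push_cast at hj; omega
    have hu : u ∈ V := hV (by simp [huv.le])
    have hv : v ∈ V := hV (by simp [huv.le])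
    have hsub : {u, v} ⊆ V := by
      intro x hx
      simp only [mem_insert, mem_singleton] at hx
      rcases hx with rfl | rfl <;> assumption
    have hcard : (V \ {u, v}).card + 2 = V.card := by
      rw [← card_pair huv.ne]
      exact card_sdiff_add_card_eq_card hsub
    have ih := card_le_of_avoid_pairs j (V \ {u, v}) (u + 1) (v - 1)
      (by push_cast at hj; omega)
      (by
        intro x hx
        rw [mem_Icc] at hx
        simp only [mem_sdiff, mem_insert, mem_singleton]
        exact ⟨hV (mem_Icc.2 ⟨by omega, by omega⟩), by omega⟩)
      (B.image fun M => M \ {u, v})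
      (by
        intro M' hM'
        obtain ⟨M, hM, rfl⟩ := mem_image.1 hM'
        refine ⟨sdiff_subset_sdiff (hB M hM).1 (Subset.refl _), ?_⟩
        rintro m hm ⟨h1, h2⟩
        rw [mem_Icc] at hm
        refine (hB M hM).2 m (mem_Icc.2 ⟨by omega, by omega⟩) ⟨(mem_sdiff.1 h1).1, ?_⟩
        have := (mem_sdiff.1 h2).1
        rwa [show u + 1 + (v - 1) - m = u + v - m by ring] at this)
    have h3 : B.card ≤
        ((B.image fun M => M \ {u, v}) ×ˢ ({∅, {u}, {v}} : Finset (Finset ℤ))).card := by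
      refine card_le_card_of_injOn (fun M => (M \ {u, v}, M ∩ {u, v})) ?_ ?_
      · intro M hM
        have hM : M ∈ B := hM
        refine mem_coe.2 (mem_product.2 ⟨mem_image_of_mem _ hM, ?_⟩)
        have hn : ¬ (u ∈ M ∧ v ∈ M) := by
          have := (hB M hM).2 u (by simp [huv.le])
          simpa using this
        by_cases h1 : u ∈ M <;> by_cases h2 : v ∈ M
        · exact absurd ⟨h1, h2⟩ hn
        · have : M ∩ {u, v} = {u} := by grind
          simp [this]
        · have : M ∩ {u, v} = {v} := by grind
          simp [this]
        · have : M ∩ {u, v} = ∅ := by grind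
          simp [this]
      · intro M _ M' _ h
        simp only [Prod.mk.injEq] at h
        rw [← sdiff_union_inter M {u, v}, ← sdiff_union_inter M' {u, v}, h.1, h.2]
    have h4 : B.card ≤ (B.image fun M => M \ {u, v}).card * 3 := by
      rw [card_product] at h3
      exact h3.trans (Nat.mul_le_mul_left _ card_le_three)
    have h5 : (B.card : ℝ) ≤ ((B.image fun M => M \ {u, v}).card : ℝ) * 3 := by exact_mod_cast h4
    rw [pairProb, ← hcard, pow_add]
    linarith

/-- The number of subsets of `U` that avoid `D` and contain no reflected pair of `[u, v]`. -/
lemma card_le_of_avoid (j : ℕ) (U D : Finset ℤ) (u v : ℤ) (hj : v - u + 1 = j) (hD : D ⊆ U)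
    (hI : Icc u v ⊆ U \ D) (B : Finset (Finset ℤ))
    (hB : ∀ M ∈ B, M ⊆ U ∧ (∀ d ∈ D, d ∉ M) ∧
      ∀ m ∈ Icc u v, ¬ (m ∈ M ∧ u + v - m ∈ M)) :
    (B.card : ℝ) ≤ 2 ^ U.card * ((2 : ℝ) ^ (-(D.card : ℤ)) * pairProb j) := by
  have h := card_le_of_avoid_pairs j (U \ D) u v hj hI B (by
    intro M hM
    obtain ⟨h1, h2, h3⟩ := hB M hM
    exact ⟨fun x hx => mem_sdiff.2 ⟨h1 hx, fun hd => h2 x hd hx⟩, h3⟩)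
  have hc := card_sdiff_add_card_eq_card hD
  refine h.trans (le_of_eq ?_)
  rw [← hc, pow_add, zpow_neg, zpow_natCast]
  field_simp

theorem stmt17 (l : ℤ) (hl : 1 ≤ l) (L R₀ : Finset ℤ)
    (hL : L ⊆ Finset.Icc 0 (l - 1)) (hR₀ : R₀ ⊆ Finset.Icc 0 (l - 1))
    (a : ℤ) (ha : 2 ≤ a)
    (haL : Finset.Icc l (2 * l - a) ⊆ L + L)
    (haR : Finset.Icc (a - 2) (l - 2) ⊆ R₀ + R₀)
    (ε : ℝ) (hε : 0 < ε) :
    ∃ r₀ : ℤ, ∀ r : ℤ, r₀ ≤ r →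
      (1 - ((a : ℝ) - 2) * ((2 : ℝ) ^ (-(((R₀.filter (fun i => a - 2 ≤ i)).card : ℤ)))
              + (2 : ℝ) ^ (-(((L.filter (fun i => i ≤ l - a + 1)).card : ℤ))))
          - 6 * ((2 : ℝ) ^ (-(L.card : ℤ)) + (2 : ℝ) ^ (-(R₀.card : ℤ))) - ε)
          * (2 : ℝ) ^ (r - 2 * l) ≤
      (((Finset.Icc l (r - l - 1)).powerset.filter (fun M =>
          Finset.Icc (2 * l - a + 1) (2 * r - 2 * l + a - 3) ⊆
            (L ∪ M ∪ R₀.image (fun x => (r - l) + x))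
              + (L ∪ M ∪ R₀.image (fun x => (r - l) + x)))).card : ℝ) := by
  have hl0 : (0 : ℝ) < l := by exact_mod_cast (by omega : 0 < l)
  -- The central range of sums has `2 * l - 1` elements, each of which may cost `ε / (2 * l)`.
  obtain ⟨J, hJ⟩ := exists_pairProb_le (δ := ε / (2 * l)) (by positivity)
  refine ⟨4 * l + J, fun r hr => ?_⟩
  set U := Icc l (r - l - 1) with hU
  set R := R₀.image (fun x => (r - l) + x) with hR
  have hUcard : (U.card : ℤ) = r - 2 * l := by
    rw [hU, Int.card_Icc]; omega
  rw [← hUcard, zpow_natCast]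
  have hLm : ∀ i ∈ L, 0 ≤ i ∧ i ≤ l - 1 := fun i hi => mem_Icc.1 (hL hi)
  have hRm : ∀ i ∈ R₀, 0 ≤ i ∧ i ≤ l - 1 := fun i hi => mem_Icc.1 (hR₀ hi)
  let bad : ℤ → Finset (Finset ℤ) := fun k =>
    U.powerset.filter fun M => k ∉ (L ∪ M ∪ R) + (L ∪ M ∪ R)
  have hbad : ∀ k, ∀ M ∈ bad k, M ⊆ U ∧
      ∀ x ∈ L ∪ M ∪ R, ∀ y ∈ M, x + y ≠ k := by
    intro k M hM
    obtain ⟨h1, h2⟩ := mem_filter.1 hM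
    refine ⟨mem_powerset.1 h1, fun x hx y hy hxy => h2 ?_⟩
    rw [← hxy]
    exact add_mem_add hx (by simp [hy])
  have hpair : ∀ k u v, u + v = k → ∀ M ∈ bad k, ∀ m ∈ Icc u v,
      ¬ (m ∈ M ∧ u + v - m ∈ M) := by
    rintro k u v hk M hM m _ ⟨h1, h2⟩
    exact (hbad k M hM).2 m (by simp [h1]) _ h2 (by omega)
  have hsingleL : ∀ k, ∀ T ⊆ L, ∀ M ∈ bad k, ∀ d ∈ T.image (fun i => k - i), d ∉ M := by
    intro k T hT M hM d hd hdM
    obtain ⟨i, hi, rfl⟩ := mem_image.1 hd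
    exact (hbad k M hM).2 i (by simp [hT hi]) _ hdM (by omega)
  have hsingleR : ∀ k, ∀ T ⊆ R₀, ∀ M ∈ bad k,
      ∀ d ∈ T.image (fun i => k - (r - l) - i), d ∉ M := by
    intro k T hT M hM d hd hdM
    obtain ⟨i, hi, rfl⟩ := mem_image.1 hd
    refine (hbad k M hM).2 ((r - l) + i) (mem_union_right _ ?_) _ hdM (by omega)
    exact mem_image_of_mem _ (hT hi)
  have hcardL : ∀ (k : ℤ) (T : Finset ℤ), (T.image (fun i => k - i)).card = T.card :=
    fun k T => card_image_of_injective _ (sub_right_injective)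
  set TL := L.filter (fun i => i ≤ l - a + 1) with hTL
  set TR := R₀.filter (fun i => a - 2 ≤ i) with hTR
  set P : ℝ := 2 ^ U.card with hP
  have hP0 : 0 ≤ P := by positivity
  -- In the two extreme ranges the interval `[1, 0]` is used: no pairs, only single points.
  have b1 : ∀ k ∈ Icc (2 * l - a + 1) (2 * l - 2),
      ((bad k).card : ℝ) ≤ P * (2 : ℝ) ^ (-(TL.card : ℤ)) := by
    intro k hk
    rw [mem_Icc] at hk
    have h := card_le_of_avoid 0 U (TL.image (fun i => k - i)) 1 0 (by simp) (by
      intro d hd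
      obtain ⟨i, hi, rfl⟩ := mem_image.1 hd
      obtain ⟨h1, h2⟩ := mem_filter.1 hi
      have := hLm i h1
      exact mem_Icc.2 ⟨by omega, by omega⟩) (by simp) (bad k)
      (fun M hM => ⟨(hbad k M hM).1, hsingleL k TL (filter_subset _ _) M hM, by simp⟩)
    rwa [hcardL, pairProb, mul_one] at h
  have b5 : ∀ k ∈ Icc (2 * r - 2 * l) (2 * r - 2 * l + a - 3),
      ((bad k).card : ℝ) ≤ P * (2 : ℝ) ^ (-(TR.card : ℤ)) := by
    intro k hk
    rw [mem_Icc] at hk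
    have h := card_le_of_avoid 0 U (TR.image (fun i => k - (r - l) - i)) 1 0 (by simp) (by
      intro d hd
      obtain ⟨i, hi, rfl⟩ := mem_image.1 hd
      obtain ⟨h1, h2⟩ := mem_filter.1 hi
      have := hRm i h1
      exact mem_Icc.2 ⟨by omega, by omega⟩) (by simp) (bad k)
      (fun M hM => ⟨(hbad k M hM).1, hsingleR k TR (filter_subset _ _) M hM, by simp⟩)
    rwa [hcardL, pairProb, mul_one] at h
  have b2 : ∀ k ∈ Icc (2 * l - 1) (r - l - 1),
      ((bad k).card : ℝ) ≤
        P * ((2 : ℝ) ^ (-(L.card : ℤ)) * pairProb (k - 2 * l + 1).toNat) := by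
    intro k hk
    rw [mem_Icc] at hk
    have h := card_le_of_avoid (k - 2 * l + 1).toNat U (L.image (fun i => k - i)) l (k - l)
      (by omega) (by
      intro d hd
      obtain ⟨i, hi, rfl⟩ := mem_image.1 hd
      have := hLm i hi
      exact mem_Icc.2 ⟨by omega, by omega⟩) (by
      intro x hx
      rw [mem_Icc] at hx
      refine mem_sdiff.2 ⟨mem_Icc.2 ⟨by omega, by omega⟩, fun hd => ?_⟩
      obtain ⟨i, hi, hix⟩ := mem_image.1 hd
      have := hLm i hi
      omega) (bad k)
      (fun M hM => ⟨(hbad k M hM).1, hsingleL k L (Subset.refl _) M hM,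
        hpair k _ _ (by omega) M hM⟩)
    rwa [hcardL] at h
  have b4 : ∀ k ∈ Icc (r + l - 1) (2 * r - 2 * l - 1),
      ((bad k).card : ℝ) ≤
        P * ((2 : ℝ) ^ (-(R₀.card : ℤ)) * pairProb (2 * r - 2 * l - 1 - k).toNat) := by
    intro k hk
    rw [mem_Icc] at hk
    have h := card_le_of_avoid (2 * r - 2 * l - 1 - k).toNat U
      (R₀.image (fun i => k - (r - l) - i)) (k - (r - l - 1)) (r - l - 1)
      (by omega) (by
      intro d hd
      obtain ⟨i, hi, rfl⟩ := mem_image.1 hd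
      have := hRm i hi
      exact mem_Icc.2 ⟨by omega, by omega⟩) (by
      intro x hx
      rw [mem_Icc] at hx
      refine mem_sdiff.2 ⟨mem_Icc.2 ⟨by omega, by omega⟩, fun hd => ?_⟩
      obtain ⟨i, hi, hix⟩ := mem_image.1 hd
      have := hRm i hi
      omega) (bad k)
      (fun M hM => ⟨(hbad k M hM).1, hsingleR k R₀ (Subset.refl _) M hM,
        hpair k _ _ (by omega) M hM⟩)
    rwa [hcardL] at h
  have b3 : ∀ k ∈ Icc (r - l) (r + l - 2),
      ((bad k).card : ℝ) ≤ P * (ε / (2 * l)) := by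
    intro k hk
    rw [mem_Icc] at hk
    -- The largest interval symmetric about `k / 2` inside `U` has at least `r - 3 * l + 1` points.
    obtain ⟨u, v, huv, hul, hvr, hlen⟩ : ∃ u v : ℤ, u + v = k ∧ l ≤ u ∧ v ≤ r - l - 1 ∧
        J ≤ v - u + 1 := by
      rcases le_total k (r - 1) with h | h
      · exact ⟨l, k - l, by omega, by omega, by omega, by omega⟩
      · exact ⟨k - (r - l - 1), r - l - 1, by omega, by omega, by omega, by omega⟩
    have h := card_le_of_avoid (v - u + 1).toNat U ∅ u v (by omega) (by simp) (by
      rw [sdiff_empty]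
      exact Icc_subset_Icc hul hvr) (bad k)
      (fun M hM => ⟨(hbad k M hM).1, by simp, hpair k _ _ huv M hM⟩)
    have hJ' := hJ (v - u + 1).toNat (by omega)
    simp only [card_empty, Nat.cast_zero, neg_zero, zpow_zero, one_mul] at h
    exact h.trans (mul_le_mul_of_nonneg_left hJ' hP0)
  have ha' : ((a - 2).toNat : ℝ) = (a : ℝ) - 2 := by
    have : ((a - 2).toNat : ℤ) = a - 2 := by omega
    exact_mod_cast congrArg (Int.cast : ℤ → ℝ) this
  have s1 : ∑ k ∈ Icc (2 * l - a + 1) (2 * l - 2), ((bad k).card : ℝ) ≤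
      ((a : ℝ) - 2) * (P * (2 : ℝ) ^ (-(TL.card : ℤ))) := by
    have := sum_le_card_nsmul _ _ _ b1
    rwa [Int.card_Icc, nsmul_eq_mul,
      show 2 * l - 2 + 1 - (2 * l - a + 1) = a - 2 by ring, ha'] at this
  have s5 : ∑ k ∈ Icc (2 * r - 2 * l) (2 * r - 2 * l + a - 3), ((bad k).card : ℝ) ≤
      ((a : ℝ) - 2) * (P * (2 : ℝ) ^ (-(TR.card : ℤ))) := by
    have := sum_le_card_nsmul _ _ _ b5
    rwa [Int.card_Icc, nsmul_eq_mul,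
      show 2 * r - 2 * l + a - 3 + 1 - (2 * r - 2 * l) = a - 2 by ring, ha'] at this
  have s2 : ∑ k ∈ Icc (2 * l - 1) (r - l - 1), ((bad k).card : ℝ) ≤
      P * ((2 : ℝ) ^ (-(L.card : ℤ)) * 6) := by
    refine (sum_le_sum b2).trans ?_
    rw [← mul_sum, ← mul_sum]
    have : ∑ k ∈ Icc (2 * l - 1) (r - l - 1), pairProb (k - 2 * l + 1).toNat ≤ 6 := by
      refine sum_pairProb_le (f := fun k => (k - 2 * l + 1).toNat) ?_
      intro x hx y hy hxy
      simp only [coe_Icc, Set.mem_Icc] at hx hy hxy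
      omega
    gcongr
  have s4 : ∑ k ∈ Icc (r + l - 1) (2 * r - 2 * l - 1), ((bad k).card : ℝ) ≤
      P * ((2 : ℝ) ^ (-(R₀.card : ℤ)) * 6) := by
    refine (sum_le_sum b4).trans ?_
    rw [← mul_sum, ← mul_sum]
    have : ∑ k ∈ Icc (r + l - 1) (2 * r - 2 * l - 1),
        pairProb (2 * r - 2 * l - 1 - k).toNat ≤ 6 := by
      refine sum_pairProb_le (f := fun k => (2 * r - 2 * l - 1 - k).toNat) ?_
      intro x hx y hy hxy
      simp only [coe_Icc, Set.mem_Icc] at hx hy hxy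
      omega
    gcongr
  have s3 : ∑ k ∈ Icc (r - l) (r + l - 2), ((bad k).card : ℝ) ≤ P * ε := by
    have := sum_le_card_nsmul _ _ _ b3
    rw [Int.card_Icc, nsmul_eq_mul] at this
    refine this.trans ?_
    have hc : (((r + l - 2 + 1 - (r - l)).toNat : ℕ) : ℝ) ≤ 2 * l := by
      have : ((r + l - 2 + 1 - (r - l)).toNat : ℤ) ≤ 2 * l := by omega
      exact_mod_cast (Int.cast_le (R := ℝ)).2 this
    calc _ ≤ (2 * (l : ℝ)) * (P * (ε / (2 * l))) := by gcongr
      _ = P * ε := by field_simp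
  set good := U.powerset.filter (fun M =>
    Icc (2 * l - a + 1) (2 * r - 2 * l + a - 3) ⊆ (L ∪ M ∪ R) + (L ∪ M ∪ R)) with hgood
  have hcover : U.powerset ⊆ good ∪
      ((Icc (2 * l - a + 1) (2 * l - 2)).biUnion bad ∪
      ((Icc (2 * l - 1) (r - l - 1)).biUnion bad ∪
      ((Icc (r - l) (r + l - 2)).biUnion bad ∪
      ((Icc (r + l - 1) (2 * r - 2 * l - 1)).biUnion bad ∪
      (Icc (2 * r - 2 * l) (2 * r - 2 * l + a - 3)).biUnion bad)))) := by
    intro M hM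
    by_cases hg : M ∈ good
    · exact mem_union_left _ hg
    · refine mem_union_right _ ?_
      have : ¬ (Icc (2 * l - a + 1) (2 * r - 2 * l + a - 3) ⊆ (L ∪ M ∪ R) + (L ∪ M ∪ R)) :=
        fun h => hg (mem_filter.2 ⟨hM, h⟩)
      obtain ⟨k, hk, hkn⟩ := not_subset.1 this
      have hkb : M ∈ bad k := mem_filter.2 ⟨hM, hkn⟩
      rw [mem_Icc] at hk
      simp only [mem_union, mem_biUnion, mem_Icc]
      by_cases h1 : k ≤ 2 * l - 2
      · exact Or.inl ⟨k, ⟨by omega, by omega⟩, hkb⟩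
      by_cases h2 : k ≤ r - l - 1
      · exact Or.inr (Or.inl ⟨k, ⟨by omega, by omega⟩, hkb⟩)
      by_cases h3 : k ≤ r + l - 2
      · exact Or.inr (Or.inr (Or.inl ⟨k, ⟨by omega, by omega⟩, hkb⟩))
      by_cases h4 : k ≤ 2 * r - 2 * l - 1
      · exact Or.inr (Or.inr (Or.inr (Or.inl ⟨k, ⟨by omega, by omega⟩, hkb⟩)))
      · exact Or.inr (Or.inr (Or.inr (Or.inr ⟨k, ⟨by omega, by omega⟩, hkb⟩)))
  have hcount : P ≤ good.card +
      (∑ k ∈ Icc (2 * l - a + 1) (2 * l - 2), ((bad k).card : ℝ) +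
      (∑ k ∈ Icc (2 * l - 1) (r - l - 1), ((bad k).card : ℝ) +
      (∑ k ∈ Icc (r - l) (r + l - 2), ((bad k).card : ℝ) +
      (∑ k ∈ Icc (r + l - 1) (2 * r - 2 * l - 1), ((bad k).card : ℝ) +
      ∑ k ∈ Icc (2 * r - 2 * l) (2 * r - 2 * l + a - 3), ((bad k).card : ℝ))))) := by
    have h := card_le_card hcover
    rw [card_powerset] at h
    have h' := h.trans <| (card_union_le _ _).trans <| Nat.add_le_add_left
      ((card_union_le _ _).trans <| Nat.add_le_add card_biUnion_le <|
      (card_union_le _ _).trans <| Nat.add_le_add card_biUnion_le <|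
      (card_union_le _ _).trans <| Nat.add_le_add card_biUnion_le <|
      (card_union_le _ _).trans <| Nat.add_le_add card_biUnion_le card_biUnion_le) _
    rw [hP]
    exact_mod_cast h'
  linarith
end

section
/- Fix an integer n ≥ 1 and subsets L ⊆ [0, n−1] and R ⊆ [n, 2n−1]. Let a be an integer with a ≥ 2 such that [n, 2n−a] ⊆ L + L and [2n+a−2, 3n−2] ⊆ R + R, and set τ(L) = |{i ∈ L : i ≤ n−a+1}| and τ(R) = |{i ∈ R : i ≥ n+a−2}|. For every ε > 0 there exists m_0 such that for all integers m ≥ m_0 the following holds: the number of subsets M of [n, n+m−1] for which the set S = L ∪ M ∪ (R+m) does NOT satisfy [2n−a+1, 2n+2m+a−3] ⊆ S + S is at most ((a−2)(2^{−τ(R)} + 2^{−τ(L)}) + 6(2^{−|L|} + 2^{−|R|}) + ε) · 2^{m}. -/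
/-!
The bound is a union bound over the values `k` that may be missed by `S + S`.

Write `M` for a uniformly random subset of `[n, n+m-1]`. The lower half of the target,
`k ≤ 2n+m-1`, is controlled using only `L ∪ M` (`half_bound`).
* For `k ∈ [2n-a+1, 2n-2]` (`a-2` values), missing `k` forces `k - l ∉ M` for every `l ∈ L` with
  `l ≤ n-a+1`, which has probability at most `2^{-τ(L)}`.
* For `k = 2n-1+j` with `0 ≤ j ≤ m-n`, missing `k` forces `k - l ∉ M` for all `l ∈ L`, and,
  independently, that the reflection `x ↦ k - x` of the interval `[n, n+j-1]` never has both `x` and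
  `k - x` in `M`. The second event has probability `pairWeight j`, equal to `(3/4)^{j/2}` for even `j`
  and `(1/2)(3/4)^{(j-1)/2}` for odd `j`; these weights sum to `4 + 2 = 6`.
* For the last `n` values of `k` only the reflection condition is used; each has probability
  exponentially small in `m`, so together they are absorbed by `ε`.

The upper half `k ≥ 2n+m-1` follows from the lower half through the reflection
`x ↦ 2n+m-1-x`, which preserves `[n, n+m-1]` and exchanges the roles of `L` and `R`.
-/

open Finset Pointwise

/-- The probability that a uniformly random subset of an interval of `j` integers contains no `x`
together with its mirror image. A central point is its own mirror image, so for odd `j` it must be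
omitted. -/
noncomputable def pairWeight : ℕ → ℝ
  | 0 => 1
  | 1 => 1 / 2
  | j + 2 => 3 / 4 * pairWeight j

lemma pairWeight_nonneg (j : ℕ) : 0 ≤ pairWeight j := by
  induction j using Nat.twoStepInduction with
  | zero => norm_num [pairWeight]
  | one => norm_num [pairWeight]
  | more j h _ => rw [pairWeight]; positivity

lemma pairWeight_le (j : ℕ) : pairWeight j ≤ (7 / 8 : ℝ) ^ j := by
  induction j using Nat.twoStepInduction with
  | zero => norm_num [pairWeight]
  | one => norm_num [pairWeight]
  | more j h _ =>
    have : (0 : ℝ) ≤ (7 / 8 : ℝ) ^ j := by positivity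
    rw [pairWeight, pow_add]
    nlinarith

lemma sum_pairWeight (J : ℕ) :
    ∑ j ∈ range J, pairWeight j = 6 - 4 * (pairWeight J + pairWeight (J + 1)) := by
  induction J with
  | zero => norm_num [pairWeight]
  | succ J ih => rw [sum_range_succ, ih, pairWeight]; ring

lemma sum_pairWeight_le (J : ℕ) : ∑ j ∈ range J, pairWeight j ≤ 6 := by
  rw [sum_pairWeight]
  linarith [pairWeight_nonneg J, pairWeight_nonneg (J + 1)]

/-- The subsets of `[u, u+j-1]` containing no element together with its mirror image. -/
noncomputable def mirrorFree (u : ℤ) (j : ℕ) : Finset (Finset ℤ) :=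
  (Icc u (u + j - 1)).powerset.filter (fun N => ∀ x ∈ N, 2 * u + j - 1 - x ∉ N)

/-- Removing the two endpoints leaves a mirror-free subset of the inner interval, and at most three
of the four possibilities for the endpoints are allowed. -/
lemma card_mirrorFree_step (u : ℤ) (j : ℕ) :
    (mirrorFree u (j + 2)).card ≤ 3 * (mirrorFree (u + 1) j).card := by
  have hne : u ≠ u + j + 1 := by omega
  have h3 : (({u, u + j + 1} : Finset ℤ).powerset.erase {u, u + j + 1}).card = 3 := by
    rw [card_erase_of_mem (by simp), card_powerset, card_pair hne]
    norm_num
  rw [← h3, ← card_product]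
  apply card_le_card_of_injOn
    (fun N => (N ∩ {u, u + j + 1}, N ∩ Icc (u + 1) (u + 1 + j - 1)))
  · intro N hN
    simp only [mirrorFree, coe_filter, mem_powerset, Set.mem_ofPred_eq] at hN
    obtain ⟨hs, hN⟩ := hN
    simp only [coe_product, Set.mem_prod, mem_coe, mem_erase, mem_powerset, mirrorFree, mem_filter]
    refine ⟨⟨fun h => ?_, inter_subset_right⟩, inter_subset_right, fun x hx hx' => ?_⟩
    · have h1 : u ∈ N ∩ {u, u + j + 1} := by rw [h]; simp
      have h2 : u + j + 1 ∈ N ∩ {u, u + j + 1} := by rw [h]; simp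
      apply hN u (mem_inter.1 h1).1
      convert (mem_inter.1 h2).1 using 1
      push_cast; ring
    · apply hN x (mem_inter.1 hx).1
      convert (mem_inter.1 hx').1 using 1
      push_cast; ring
  · intro N hN N' hN' h
    simp only [mirrorFree, coe_filter, mem_powerset, Set.mem_ofPred_eq] at hN hN'
    simp only [Prod.mk.injEq] at h
    ext x
    have h1 := Finset.ext_iff.1 h.1 x
    have h2 := Finset.ext_iff.1 h.2 x
    have a1 := @hN.1 x
    have a2 := @hN'.1 x
    simp only [mem_inter, mem_insert, mem_singleton, mem_Icc] at h1 h2 a1 a2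
    push_cast at a1 a2
    by_cases hx : x = u ∨ x = u + j + 1
    · simpa only [hx, and_true] using h1
    · by_cases hx2 : u + 1 ≤ x ∧ x ≤ u + 1 + j - 1
      · simpa only [hx2, and_self, and_true] using h2
      · constructor <;> intro hh
        · have := a1 hh; omega
        · have := a2 hh; omega

lemma card_mirrorFree_le (j : ℕ) (u : ℤ) :
    ((mirrorFree u j).card : ℝ) ≤ pairWeight j * 2 ^ j := by
  induction j using Nat.twoStepInduction generalizing u with
  | zero =>
    have : (mirrorFree u 0).card ≤ 1 := by
      refine (card_filter_le _ _).trans ?_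
      simp
    simpa [pairWeight] using this
  | one =>
    have : (mirrorFree u 1).card ≤ 1 := by
      rw [card_le_one]
      -- The only member is `∅`, because `u` is its own mirror image.
      have key : ∀ N ∈ mirrorFree u 1, N = ∅ := by
        intro N hN
        simp only [mirrorFree, mem_filter, mem_powerset] at hN
        rw [eq_empty_iff_forall_notMem]
        intro x hx
        have h1 := hN.1 hx
        rw [mem_Icc] at h1
        push_cast at h1
        apply hN.2 x hx
        convert hx using 1
        push_cast
        omega
      intro N hN N' hN'
      rw [key N hN, key N' hN']
    norm_num [pairWeight]
    exact_mod_cast this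
  | more j h _ =>
    have h1 : ((mirrorFree u (j + 2)).card : ℝ) ≤ 3 * (mirrorFree (u + 1) j).card := by
      exact_mod_cast card_mirrorFree_step u j
    have h2 := h (u + 1)
    rw [pairWeight, pow_add]
    linarith

/-- Avoiding `T` and being mirror-free on a disjoint interval `J` are independent events for a random
subset of `I`. -/
lemma card_avoid_le (I T : Finset ℤ) (u : ℤ) (j : ℕ) (hJ : Icc u (u + j - 1) ⊆ I) (hT : T ⊆ I)
    (hd : Disjoint (Icc u (u + j - 1)) T) (F : Finset (Finset ℤ))
    (hF : ∀ M ∈ F, M ⊆ I ∧ (∀ t ∈ T, t ∉ M) ∧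
      ∀ x ∈ M, x ∈ Icc u (u + j - 1) → 2 * u + j - 1 - x ∉ M) :
    (F.card : ℝ) ≤ pairWeight j * (2 : ℝ) ^ (-(T.card : ℤ)) * 2 ^ I.card := by
  have hcard : F.card ≤ (mirrorFree u j ×ˢ ((I \ Icc u (u + j - 1)) \ T).powerset).card := by
    apply card_le_card_of_injOn
      (fun M => (M ∩ Icc u (u + j - 1), M \ Icc u (u + j - 1)))
    · intro M hM
      obtain ⟨h1, h2, h3⟩ := hF M hM
      simp only [coe_product, Set.mem_prod, mem_coe, mem_powerset, mirrorFree, mem_filter]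
      refine ⟨⟨inter_subset_right, fun x hx hx' => ?_⟩, fun x hx => ?_⟩
      · exact h3 x (mem_inter.1 hx).1 (mem_inter.1 hx).2 (mem_inter.1 hx').1
      · rw [mem_sdiff] at hx
        rw [mem_sdiff, mem_sdiff]
        exact ⟨⟨h1 hx.1, hx.2⟩, fun ht => h2 x ht hx.1⟩
    · intro M _ M' _ h
      simp only [Prod.mk.injEq] at h
      rw [← sdiff_union_inter M (Icc u (u + j - 1)), h.1, h.2, sdiff_union_inter]
  have hJc : (Icc u (u + j - 1)).card = j := by rw [Int.card_Icc]; omega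
  have hTJ : T ⊆ I \ Icc u (u + j - 1) := fun t ht =>
    mem_sdiff.2 ⟨hT ht, fun h => disjoint_left.1 hd h ht⟩
  have e1 := card_sdiff_add_card_eq_card hTJ
  have e2 := card_sdiff_add_card_eq_card hJ
  rw [hJc] at e2
  rw [card_product, card_powerset] at hcard
  set r := ((I \ Icc u (u + j - 1)) \ T).card
  have hI : I.card = r + T.card + j := by omega
  have h2 := card_mirrorFree_le j u
  calc (F.card : ℝ) ≤ (mirrorFree u j).card * 2 ^ r := by exact_mod_cast hcard
    _ ≤ pairWeight j * 2 ^ j * 2 ^ r := by gcongr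
    _ = _ := by
      rw [hI, zpow_neg, zpow_natCast, pow_add, pow_add]
      field_simp

/-- The subsets `M` of `[n, n+p-1]` for which `(L ∪ M) + (L ∪ M)` misses `k`. -/
noncomputable def missing (n : ℤ) (L : Finset ℤ) (p : ℕ) (k : ℤ) : Finset (Finset ℤ) :=
  (Icc n (n + p - 1)).powerset.filter (fun M => k ∉ (L ∪ M) + (L ∪ M))

/-- If every `l ∈ L'` has its complement `k - l` in the range of `M` but outside the mirror interval
`[u, u+j-1]`, whose centre is `k / 2` unless it is empty, both obstructions are available. -/
lemma card_missing_le (n : ℤ) (L L' : Finset ℤ) (hL' : L' ⊆ L) (p : ℕ) (k u : ℤ) (j : ℕ)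
    (hk : j = 0 ∨ k = 2 * u + j - 1) (hu : n ≤ u) (hup : u + j ≤ n + p)
    (h1 : ∀ l ∈ L', n ≤ k - l ∧ k - l ≤ n + p - 1 ∧ (u + j ≤ k - l ∨ j = 0)) :
    ((missing n L p k).card : ℝ) ≤ pairWeight j * (2 : ℝ) ^ (-(L'.card : ℤ)) * 2 ^ p := by
  have hc : (L'.image (fun l => k - l)).card = L'.card :=
    card_image_of_injective _ (fun x y h => by simpa using h)
  have hI : (Icc n (n + p - 1)).card = p := by rw [Int.card_Icc]; omega
  have := card_avoid_le (Icc n (n + p - 1)) (L'.image (fun l => k - l)) u j ?_ ?_ ?_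
    (missing n L p k) ?_
  · rwa [hc, hI] at this
  · intro x hx; rw [mem_Icc] at hx ⊢; omega
  · intro x hx
    obtain ⟨l, hl, rfl⟩ := mem_image.1 hx
    have := h1 l hl
    rw [mem_Icc]; omega
  · rw [disjoint_left]
    intro x hx hx'
    obtain ⟨l, hl, rfl⟩ := mem_image.1 hx'
    have := h1 l hl
    rw [mem_Icc] at hx; omega
  · intro M hM
    simp only [missing, mem_filter, mem_powerset] at hM
    refine ⟨hM.1, ?_, ?_⟩
    · intro t ht htM
      obtain ⟨l, hl, rfl⟩ := mem_image.1 ht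
      exact hM.2 (mem_add.2 ⟨l, mem_union_left _ (hL' hl), k - l, mem_union_right _ htM, by ring⟩)
    · intro x hx hxJ hx'
      rw [mem_Icc] at hxJ
      have hk' : k = 2 * u + j - 1 := by omega
      exact hM.2 (mem_add.2 ⟨x, mem_union_right _ hx, _, mem_union_right _ hx', by omega⟩)

/-- The bound for the lower half of the target, using sums from `L ∪ M` only. -/
lemma half_bound (n : ℤ) (hn : 1 ≤ n) (L : Finset ℤ) (hL : L ⊆ Icc 0 (n - 1))
    (a : ℤ) (ha : 2 ≤ a) (ε : ℝ) (hε : 0 < ε) :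
    ∃ p₀ : ℕ, ∀ p : ℕ, p₀ ≤ p →
      (((Icc n (n + p - 1)).powerset.filter (fun M =>
          ¬ Icc (2 * n - a + 1) (2 * n + p - 1) ⊆ (L ∪ M) + (L ∪ M))).card : ℝ) ≤
      (((a : ℝ) - 2) * (2 : ℝ) ^ (-((L.filter (fun i => i ≤ n - a + 1)).card : ℤ))
          + 6 * (2 : ℝ) ^ (-(L.card : ℤ)) + ε) * 2 ^ p := by
  obtain ⟨N, rfl⟩ : ∃ N : ℕ, n = N := ⟨n.toNat, by omega⟩
  obtain ⟨Q, hQ⟩ := exists_pow_lt_of_lt_one (y := (7 / 8 : ℝ)) (x := ε / N)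
    (by have : (0 : ℝ) < N := by exact_mod_cast hn
        positivity) (by norm_num)
  refine ⟨Q + N, fun p hp => ?_⟩
  set A : ℝ := (2 : ℝ) ^ (-((L.filter (fun i => i ≤ N - a + 1)).card : ℤ))
  set B : ℝ := (2 : ℝ) ^ (-(L.card : ℤ))
  have hB : 0 ≤ B := by positivity
  have hsub : (Icc (N : ℤ) (N + p - 1)).powerset.filter (fun M =>
          ¬ Icc (2 * (N : ℤ) - a + 1) (2 * N + p - 1) ⊆ (L ∪ M) + (L ∪ M)) ⊆
      ((Icc (2 * (N : ℤ) - a + 1) (2 * N - 2)).biUnion (missing N L p)) ∪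
      ((range (p + 1)).biUnion (fun j => missing N L p (2 * N - 1 + j))) := by
    intro M hM
    simp only [mem_filter] at hM
    obtain ⟨k, hk, hk'⟩ := not_subset.1 hM.2
    rw [mem_Icc] at hk
    have hkm : M ∈ missing N L p k := by
      simp only [missing, mem_filter]; exact ⟨hM.1, hk'⟩
    rw [mem_union, mem_biUnion, mem_biUnion]
    by_cases h : k ≤ 2 * N - 2
    · exact Or.inl ⟨k, mem_Icc.2 ⟨hk.1, h⟩, hkm⟩
    · refine Or.inr ⟨(k - (2 * N - 1)).toNat, by rw [mem_range]; omega, ?_⟩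
      have hkj : 2 * (N : ℤ) - 1 + ((k - (2 * N - 1)).toNat : ℤ) = k := by omega
      rw [hkj]
      exact hkm
  have hlow : ∀ k ∈ Icc (2 * (N : ℤ) - a + 1) (2 * N - 2),
      ((missing N L p k).card : ℝ) ≤ A * 2 ^ p := by
    intro k hk
    rw [mem_Icc] at hk
    have := card_missing_le N L (L.filter (fun i => i ≤ N - a + 1)) (filter_subset _ _) p k N 0
      (Or.inl rfl) le_rfl (by omega) (by
        intro l hl
        rw [mem_filter] at hl
        have := mem_Icc.1 (hL hl.1)
        omega)
    simpa [pairWeight, A] using this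
  have hmid : ∀ j : ℕ, j + N ≤ p →
      ((missing N L p (2 * N - 1 + j)).card : ℝ) ≤ pairWeight j * B * 2 ^ p := by
    intro j hj
    refine card_missing_le N L L (Subset.refl _) p _ N j (Or.inr (by ring)) le_rfl (by omega) ?_
    intro l hl
    have := mem_Icc.1 (hL hl)
    omega
  have htop : ∀ j : ℕ, j ≤ p →
      ((missing N L p (2 * N - 1 + j)).card : ℝ) ≤ pairWeight j * 2 ^ p := by
    intro j hj
    have := card_missing_le N L ∅ (empty_subset _) p (2 * N - 1 + j) N j (Or.inr (by ring))
      le_rfl (by omega) (by simp)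
    simpa using this
  obtain ⟨q, hq⟩ : ∃ q : ℕ, p + 1 = q + N := ⟨p + 1 - N, by omega⟩
  have hsum : ∑ j ∈ range (p + 1), ((missing N L p (2 * N - 1 + j)).card : ℝ) ≤
      (6 * B + ε) * 2 ^ p := by
    rw [hq, sum_range_add]
    have s1 : ∑ j ∈ range q, ((missing N L p (2 * N - 1 + j)).card : ℝ) ≤ 6 * B * 2 ^ p := by
      calc _ ≤ ∑ j ∈ range q, pairWeight j * (B * 2 ^ p) := by
            refine sum_le_sum fun j hj => ?_
            rw [mem_range] at hj
            rw [← mul_assoc]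
            exact hmid j (by omega)
        _ = (∑ j ∈ range q, pairWeight j) * (B * 2 ^ p) := by rw [sum_mul]
        _ ≤ 6 * (B * 2 ^ p) := by
            gcongr
            exact sum_pairWeight_le q
        _ = _ := by ring
    have s2 : ∑ i ∈ range N, ((missing N L p (2 * N - 1 + (q + i : ℕ))).card : ℝ) ≤
        ε * 2 ^ p := by
      calc _ ≤ ∑ i ∈ range N, (ε / N) * 2 ^ p := by
            refine sum_le_sum fun i hi => ?_
            rw [mem_range] at hi
            refine (htop (q + i) (by omega)).trans ?_
            gcongr
            refine (pairWeight_le _).trans (le_trans ?_ hQ.le)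
            exact pow_le_pow_of_le_one (by norm_num) (by norm_num) (by omega)
        _ = ε * 2 ^ p := by
            have : (N : ℝ) ≠ 0 := by
              have : N ≠ 0 := by omega
              exact_mod_cast this
            rw [sum_const, card_range, nsmul_eq_mul]
            field_simp
    linarith
  have hlow' : ∑ k ∈ Icc (2 * (N : ℤ) - a + 1) (2 * N - 2), ((missing N L p k).card : ℝ) ≤
      ((a : ℝ) - 2) * A * 2 ^ p := by
    refine (sum_le_card_nsmul _ _ _ hlow).trans (le_of_eq ?_)
    have hc : (((Icc (2 * (N : ℤ) - a + 1) (2 * N - 2)).card : ℤ) : ℝ) = (a : ℝ) - 2 := by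
      have : ((Icc (2 * (N : ℤ) - a + 1) (2 * N - 2)).card : ℤ) = a - 2 := by
        rw [Int.card_Icc]; omega
      rw [this]; push_cast; ring
    rw [nsmul_eq_mul, ← Int.cast_natCast, hc]
    ring
  have hcard := (card_le_card hsub).trans (card_union_le _ _)
  have hcard' := hcard.trans (add_le_add card_biUnion_le card_biUnion_le)
  have hreal := (Nat.cast_le (α := ℝ)).2 hcard'
  push_cast at hreal
  refine hreal.trans ?_
  linarith

theorem stmt18 (n : ℤ) (hn : 1 ≤ n) (L R : Finset ℤ)
    (hL : L ⊆ Finset.Icc 0 (n - 1)) (hR : R ⊆ Finset.Icc n (2 * n - 1))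
    (a : ℤ) (ha : 2 ≤ a)
    (haL : Finset.Icc n (2 * n - a) ⊆ L + L)
    (haR : Finset.Icc (2 * n + a - 2) (3 * n - 2) ⊆ R + R)
    (ε : ℝ) (hε : 0 < ε) :
    ∃ m₀ : ℤ, ∀ m : ℤ, m₀ ≤ m →
      (((Finset.Icc n (n + m - 1)).powerset.filter (fun M =>
          ¬ Finset.Icc (2 * n - a + 1) (2 * n + 2 * m + a - 3) ⊆
            (L ∪ M ∪ R.image (· + m)) + (L ∪ M ∪ R.image (· + m)))).card : ℝ) ≤
      (((a : ℝ) - 2) * ((2 : ℝ) ^ (-(((R.filter (fun i => n + a - 2 ≤ i)).card : ℤ)))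
              + (2 : ℝ) ^ (-(((L.filter (fun i => i ≤ n - a + 1)).card : ℤ))))
          + 6 * ((2 : ℝ) ^ (-(L.card : ℤ)) + (2 : ℝ) ^ (-(R.card : ℤ))) + ε)
          * (2 : ℝ) ^ m := by
  have hinj : ∀ c : ℤ, Function.Injective (fun x : ℤ => c - x) :=
    fun c x y h => by simpa using h
  -- The mirror image of `R`, which plays the role of `L` for the upper half of the target.
  set R' : Finset ℤ := R.image (fun x => 2 * n - 1 - x) with hR'
  have hR'sub : R' ⊆ Icc 0 (n - 1) := by
    intro x hx
    obtain ⟨r, hr, rfl⟩ := mem_image.1 hx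
    have := mem_Icc.1 (hR hr)
    rw [mem_Icc]; omega
  have hR'card : R'.card = R.card := card_image_of_injective _ (hinj _)
  have hR'tau : (R'.filter (fun i => i ≤ n - a + 1)).card =
      (R.filter (fun i => n + a - 2 ≤ i)).card := by
    rw [hR', filter_image, card_image_of_injective _ (hinj _)]
    congr 1
    apply filter_congr
    intro x _
    constructor <;> intro h <;> omega
  obtain ⟨p₁, h₁⟩ := half_bound n hn L hL a ha (ε / 2) (by positivity)
  obtain ⟨p₂, h₂⟩ := half_bound n hn R' hR'sub a ha (ε / 2) (by positivity)
  refine ⟨max p₁ p₂, fun m hm => ?_⟩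
  obtain ⟨p, rfl⟩ : ∃ p : ℕ, m = p := ⟨m.toNat, by omega⟩
  have b₁ := h₁ p (by omega)
  have b₂ := h₂ p (by omega)
  rw [hR'card, hR'tau] at b₂
  set F₁ := (Icc n (n + p - 1)).powerset.filter (fun M =>
          ¬ Icc (2 * n - a + 1) (2 * n + p - 1) ⊆ (L ∪ M) + (L ∪ M)) with hF₁
  set F₂ := (Icc n (n + p - 1)).powerset.filter (fun M =>
          ¬ Icc (2 * n - a + 1) (2 * n + p - 1) ⊆ (R' ∪ M) + (R' ∪ M)) with hF₂
  -- `M ↦ 2n+p-1-M` is an involution, so `F₂` is counted by its image.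
  have hsub : (Finset.Icc n (n + p - 1)).powerset.filter (fun M =>
          ¬ Finset.Icc (2 * n - a + 1) (2 * n + 2 * p + a - 3) ⊆
            (L ∪ M ∪ R.image (· + (p : ℤ))) + (L ∪ M ∪ R.image (· + (p : ℤ)))) ⊆
      F₁ ∪ F₂.image (fun M => M.image (fun x => 2 * n + p - 1 - x)) := by
    intro M hM
    rw [mem_filter, mem_powerset] at hM
    obtain ⟨hMI, hM⟩ := hM
    obtain ⟨k, hk, hk'⟩ := not_subset.1 hM
    rw [mem_Icc] at hk
    rw [mem_union]
    by_cases hkm : k ≤ 2 * n + p - 1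
    · left
      rw [hF₁, mem_filter, mem_powerset]
      exact ⟨hMI, fun h => hk' (add_subset_add subset_union_left subset_union_left
        (h (mem_Icc.2 ⟨hk.1, hkm⟩)))⟩
    · right
      rw [mem_image]
      refine ⟨M.image (fun x => 2 * n + p - 1 - x), ?_, ?_⟩
      · rw [hF₂, mem_filter, mem_powerset]
        constructor
        · intro x hx
          obtain ⟨y, hy, rfl⟩ := mem_image.1 hx
          have := mem_Icc.1 (hMI hy)
          rw [mem_Icc]; omega
        · intro h
          have hmem := h (mem_Icc.2 (show 2 * n - a + 1 ≤ 4 * n + 2 * p - 2 - k ∧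
            4 * n + 2 * p - 2 - k ≤ 2 * n + p - 1 by omega))
          obtain ⟨x, hx, y, hy, hxy⟩ := mem_add.1 hmem
          have back : ∀ z ∈ R' ∪ M.image (fun x => 2 * n + p - 1 - x),
              2 * n + p - 1 - z ∈ L ∪ M ∪ R.image (· + (p : ℤ)) := by
            intro z hz
            rcases mem_union.1 hz with hz | hz
            · obtain ⟨r, hr, rfl⟩ := mem_image.1 hz
              exact mem_union_right _ (mem_image.2 ⟨r, hr, by ring⟩)
            · obtain ⟨r, hr, rfl⟩ := mem_image.1 hz
              refine mem_union_left _ (mem_union_right _ ?_)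
              convert hr using 1
              ring
          exact hk' (mem_add.2 ⟨_, back x hx, _, back y hy, by omega⟩)
      · rw [image_image]
        ext x
        simp
  have hcard := ((card_le_card hsub).trans (card_union_le _ _)).trans
    (Nat.add_le_add_left card_image_le _)
  have hreal := (Nat.cast_le (α := ℝ)).2 hcard
  push_cast at hreal
  refine hreal.trans ?_
  rw [zpow_natCast]
  linarith
end
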